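/- arXiv:1707.02501 — 3 statements merged into one kernel-verified Lean document; each statement's English description precedes it below -/
import Mathlib

section
/- For every rational number c, the following are equivalent: (i) either Φ_{4,c} is reducible in ℚ[x], or the Galois group G_c of Φ_{4,c} over ℚ is not isomorphic to the Galois group G of Φ₄(t,x) over ℚ(t); (ii) c ∈ Im λ ∪ Im η ∪ {−5/2}. -/
open Polynomial

/-- The fourth dynatomic polynomial of `x^2 + c`. -/
noncomputable def Phi4 {K : Type*} [Field K] (c : K) : K[X] :=
  X ^ 12 + C (6 * c) * X ^ 10 + X ^ 9 + C (15 * c ^ 2 + 3 * c) * X ^ 8 +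
    C (4 * c) * X ^ 7 + C (20 * c ^ 3 + 12 * c ^ 2 + 1) * X ^ 6 +
    C (6 * c ^ 2 + 2 * c) * X ^ 5 +
    C (15 * c ^ 4 + 18 * c ^ 3 + 3 * c ^ 2 + 4 * c) * X ^ 4 +
    C (4 * c ^ 3 + 4 * c ^ 2 + 1) * X ^ 3 +
    C (6 * c ^ 5 + 12 * c ^ 4 + 6 * c ^ 3 + 5 * c ^ 2 + c) * X ^ 2 +
    C (c ^ 4 + 2 * c ^ 3 + c ^ 2 + 2 * c) * X +
    C (c ^ 6 + 3 * c ^ 5 + 3 * c ^ 4 + 3 * c ^ 3 + 2 * c ^ 2 + 1)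

/-!
The twelve points of period four of `x ^ 2 + c` form three 4-cycles, permuted by the Galois group,
so the Galois group embeds in the wreath product of `ZMod 4` by the symmetric group on three
letters. With `m = 4 * c + 3`, the sums `T₀, T₁, T₂` of the cycles are the roots of
`X ^ 3 + m * X + 4`, and the alternating sum `D i` of a cycle satisfies `D i ^ 2 = T i ^ 2 + 4`. The
embedding is onto unless the cubic has a root, one of `Δ`, `N`, `N * Δ` is a square (`Δ` being the
discriminant of the cubic and `N = ∏ i, (T i ^ 2 + 4)`), or the products `D i * D k` are so related
that the sum of the three of them, with suitable signs, is a root in the base field of a quartic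
polynomial in terms of `m`. Over `ℚ(t)` none of this happens, as one sees by specializing `t`.

Over `ℚ`, a root of the cubic means `c ∈ Im η`, and `N` is a square if and only if `c ∈ Im λ`. The
other conditions amount to rational points on the elliptic curve `y ^ 2 = x ^ 3 - 108`, on the
genus-two curve `y ^ 2 = (x ^ 3 - 108) * (x ^ 2 + 8 * x + 20)` and on the elliptic curve
`y ^ 2 = x * (x ^ 2 - 2 * x + 5)`. By descent the first two have no affine points, and the points of
the third contribute only `c = 0`, which lies in `Im η`, and `c = -5 / 2`. Conversely, a root of the
cubic makes `Phi4 c` reducible, while in the other exceptional cases `∏ i, D i` or `D 1 * D 2`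
is a polynomial in the sums of the cycles, up to sign, which makes the Galois group smaller.
-/

/-! ### Coprimality -/

lemma isCoprime_of_add_mul {R : Type*} [CommRing R] {x y : R} (h : IsCoprime (x + y) (x * y)) :
    IsCoprime x y := by
  obtain ⟨u, v, huv⟩ := h
  exact ⟨u, u + v * x, by linear_combination huv⟩

/-! ### The equation `a ^ 3 + b ^ 3 = 4 * c ^ 3` -/

/-- The ring `ℤ[ω]` of Eisenstein integers, with `ω ^ 2 = -1 - ω`. -/
abbrev EisensteinInt := QuadraticAlgebra ℤ (-1) (-1)

namespace EisensteinInt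

lemma norm_eq (z : EisensteinInt) : z.norm = z.re ^ 2 - z.re * z.im + z.im ^ 2 := by
  rw [QuadraticAlgebra.norm_def]
  ring

lemma norm_nonneg (z : EisensteinInt) : 0 ≤ z.norm := by
  rw [norm_eq]
  nlinarith [sq_nonneg (z.re - z.im), sq_nonneg z.re, sq_nonneg z.im]

lemma eq_zero_of_norm_eq_zero {z : EisensteinInt} (h : z.norm = 0) : z = 0 := by
  rw [norm_eq] at h
  have hre : z.re = 0 := by nlinarith [sq_nonneg (z.re - 2 * z.im), sq_nonneg z.re]
  have him : z.im = 0 := by nlinarith [sq_nonneg (z.im - 2 * z.re), sq_nonneg z.im]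
  ext <;> simp [hre, him]

lemma norm_pos {z : EisensteinInt} (hz : z ≠ 0) : 0 < z.norm :=
  (norm_nonneg z).lt_of_ne fun h => hz (eq_zero_of_norm_eq_zero h.symm)

/-- Euclidean quotient: the exact quotient `x * star y / norm y` with both coordinates rounded to
the nearest integer. -/
def quotient (x y : EisensteinInt) : EisensteinInt :=
  ⟨round (((x * star y).re : ℚ) / y.norm), round (((x * star y).im : ℚ) / y.norm)⟩

lemma norm_sub_mul_mul_norm (x y z : EisensteinInt) :
    (x - y * z).norm * y.norm =
      ((x * star y).re - y.norm * z.re) ^ 2 -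
        ((x * star y).re - y.norm * z.re) * ((x * star y).im - y.norm * z.im) +
        ((x * star y).im - y.norm * z.im) ^ 2 := by
  simp only [norm_eq, QuadraticAlgebra.re_mul, QuadraticAlgebra.im_mul, QuadraticAlgebra.re_sub,
    QuadraticAlgebra.im_sub, QuadraticAlgebra.re_star, QuadraticAlgebra.im_star]
  ring

lemma norm_sub_mul_quotient_lt (x : EisensteinInt) {y : EisensteinInt} (hy : y ≠ 0) :
    (x - y * quotient x y).norm < y.norm := by
  have hN : (0 : ℚ) < y.norm := by exact_mod_cast norm_pos hy
  set s : ℚ := (x * star y).re / y.norm - (quotient x y).re with hs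
  set t : ℚ := (x * star y).im / y.norm - (quotient x y).im with ht
  have hs' : ((x * star y).re : ℚ) - y.norm * (quotient x y).re = y.norm * s := by
    rw [hs]; field_simp
  have ht' : ((x * star y).im : ℚ) - y.norm * (quotient x y).im = y.norm * t := by
    rw [ht]; field_simp
  have hmul : ((x - y * quotient x y).norm : ℚ) * y.norm =
      y.norm * y.norm * (s ^ 2 - s * t + t ^ 2) := by
    have h := congrArg (Int.cast : ℤ → ℚ) (norm_sub_mul_mul_norm x y (quotient x y))
    push_cast at h
    rw [h, hs', ht']
    ring
  have hst : s ^ 2 - s * t + t ^ 2 < 1 := by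
    have hs₁ := abs_le.mp (abs_sub_round (((x * star y).re : ℚ) / y.norm))
    have ht₁ := abs_le.mp (abs_sub_round (((x * star y).im : ℚ) / y.norm))
    change -(1 / 2) ≤ s ∧ s ≤ 1 / 2 at hs₁
    change -(1 / 2) ≤ t ∧ t ≤ 1 / 2 at ht₁
    nlinarith
  have hlt : ((x - y * quotient x y).norm : ℚ) * y.norm < y.norm * y.norm := by
    rw [hmul]
    exact mul_lt_of_lt_one_right (mul_pos hN hN) hst
  exact_mod_cast lt_of_mul_lt_mul_right hlt hN.le

noncomputable instance : EuclideanDomain EisensteinInt :=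
  { (inferInstance : CommRing EisensteinInt) with
    exists_pair_ne := ⟨0, 1, fun h => by
      simpa [QuadraticAlgebra.re_one] using congrArg QuadraticAlgebra.re h⟩
    quotient := quotient
    quotient_zero := fun a => by ext <;> simp [quotient]
    remainder := fun a b => a - b * quotient a b
    quotient_mul_add_remainder_eq := fun a b => by ring
    r := fun a b => a.norm.natAbs < b.norm.natAbs
    r_wellFounded := (measure fun a : EisensteinInt => a.norm.natAbs).wf
    remainder_lt := fun a b hb =>
      Int.natAbs_lt_natAbs_of_nonneg_of_lt (norm_nonneg _) (norm_sub_mul_quotient_lt a hb)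
    mul_left_not_lt := fun a b hb => by
      rw [map_mul, Int.natAbs_mul, not_lt]
      exact Nat.le_mul_of_pos_right _ (Int.natAbs_pos.mpr (norm_pos hb).ne') }

lemma eq_of_isUnit {u : EisensteinInt} (hu : IsUnit u) :
    u = ⟨1, 0⟩ ∨ u = ⟨-1, 0⟩ ∨ u = ⟨0, 1⟩ ∨ u = ⟨0, -1⟩ ∨ u = ⟨1, 1⟩ ∨ u = ⟨-1, -1⟩ := by
  rw [QuadraticAlgebra.isUnit_iff_norm_isUnit, Int.isUnit_iff] at hu
  have hnorm : u.re ^ 2 - u.re * u.im + u.im ^ 2 = 1 := by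
    rw [← norm_eq]
    have := norm_nonneg u
    omega
  obtain ⟨a, b⟩ := u
  have ha : a ≤ 1 := by nlinarith [sq_nonneg (a - 2 * b)]
  have ha' : -1 ≤ a := by nlinarith [sq_nonneg (a - 2 * b)]
  have hb : b ≤ 1 := by nlinarith [sq_nonneg (b - 2 * a)]
  have hb' : -1 ≤ b := by nlinarith [sq_nonneg (b - 2 * a)]
  interval_cases a <;> interval_cases b <;> simp_all

lemma re_pow_three (z : EisensteinInt) :
    (z ^ 3).re = z.re ^ 3 + z.im ^ 3 - 3 * z.re * z.im ^ 2 := by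
  simp only [pow_succ, pow_zero, one_mul, QuadraticAlgebra.re_mul, QuadraticAlgebra.im_mul]
  ring

lemma im_pow_three (z : EisensteinInt) :
    (z ^ 3).im = 3 * z.re * z.im * (z.re - z.im) := by
  simp only [pow_succ, pow_zero, one_mul, QuadraticAlgebra.re_mul, QuadraticAlgebra.im_mul]
  ring

lemma even_im_pow_three (z : EisensteinInt) : Even (z ^ 3).im := by
  rw [im_pow_three]
  rcases Int.even_or_odd z.re with hx | hx
  · simp [hx, parity_simps]
  · rcases Int.even_or_odd z.im with hy | hy
    · simp [hy, parity_simps]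
    · exact (hx.sub_odd hy).mul_left _

lemma eq_pow_three_of_associated {α β : EisensteinInt} (hre : Odd α.re) (him : Even α.im)
    (h : Associated (β ^ 3) α) : ∃ γ : EisensteinInt, α = γ ^ 3 := by
  obtain ⟨u, rfl⟩ := h
  have heven := even_im_pow_three β
  rw [QuadraticAlgebra.re_mul] at hre
  rw [QuadraticAlgebra.im_mul] at him
  rw [Int.even_iff] at him heven
  rw [Int.odd_iff] at hre
  rcases eq_of_isUnit u.isUnit with hu | hu | hu | hu | hu | hu
  · exact ⟨β, by rw [hu]; exact mul_one _⟩
  · refine ⟨-β, ?_⟩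
    rw [hu, Odd.neg_pow (by decide)]
    ext <;> simp
  all_goals
    simp only [hu] at hre him
    omega

end EisensteinInt

lemma exists_cube_of_sq_add_three_mul_sq {q m t : ℤ} (h : q ^ 2 + 3 * m ^ 2 = t ^ 3)
    (hqt : IsCoprime (2 * q) t) :
    ∃ x y : ℤ, q + m = x ^ 3 + y ^ 3 - 3 * x * y ^ 2 ∧ 2 * m = 3 * x * y * (x - y) := by
  let α : EisensteinInt := ⟨q + m, 2 * m⟩
  have hadd : α + star α = ((2 * q : ℤ) : EisensteinInt) := by
    ext <;> simp only [α, QuadraticAlgebra.re_add, QuadraticAlgebra.im_add,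
      QuadraticAlgebra.re_star, QuadraticAlgebra.im_star, QuadraticAlgebra.re_intCast,
      QuadraticAlgebra.im_intCast, Int.cast_id] <;> ring
  have hmul : α * star α = (t : EisensteinInt) ^ 3 := by
    rw [← QuadraticAlgebra.algebraMap_norm_eq_mul_star, EisensteinInt.norm_eq, ← Int.cast_pow, ← h]
    change ((_ : ℤ) : EisensteinInt) = _
    congr 1
    change (q + m) ^ 2 - (q + m) * (2 * m) + (2 * m) ^ 2 = _
    ring
  have hcop : IsCoprime α (star α) := by
    apply isCoprime_of_add_mul
    rw [hadd, hmul]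
    exact (hqt.map (Int.castRingHom EisensteinInt)).pow_right
  obtain ⟨β, hβ⟩ := exists_associated_pow_of_mul_eq_pow' hcop hmul
  have hodd : Odd α.re := by
    have ht : Odd (t ^ 3) := by
      have h2 := (hqt.of_isCoprime_of_dvd_left (Dvd.intro q rfl))
      exact Odd.pow (Int.isCoprime_two_left.mp h2)
    rw [← h] at ht
    change Odd (q + m)
    simpa [parity_simps, show ¬ Even (3 : ℤ) by decide] using ht
  obtain ⟨γ, hγ⟩ := EisensteinInt.eq_pow_three_of_associated hodd (even_two_mul m) hβ
  exact ⟨γ.re, γ.im, by rw [← EisensteinInt.re_pow_three, ← hγ],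
    by rw [← EisensteinInt.im_pow_three, ← hγ]⟩

lemma dvd_of_pow_three_dvd_four_mul_pow_three {p c : ℤ} (hp : Prime p)
    (h : p ^ 3 ∣ 4 * c ^ 3) : p ∣ c := by
  by_contra hpc
  have hd : p ^ 3 ∣ 4 := hp.pow_dvd_of_dvd_mul_right 3 (mt hp.dvd_of_dvd_pow hpc) h
  have hle := Nat.le_of_dvd (by norm_num) (Int.natAbs_dvd_natAbs.mpr hd)
  rw [Int.natAbs_pow] at hle
  have htwo := (Int.prime_iff_natAbs_prime.mp hp).two_le
  have := Nat.pow_le_pow_left htwo 3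
  norm_num at this hle
  omega

section CubesSumFourCube

variable {a b c : ℤ}

lemma three_dvd_of_add_cubes_eq (h : a ^ 3 + b ^ 3 = 4 * c ^ 3) : 3 ∣ c ∧ 3 ∣ a + b := by
  have hmod : ∀ x y z : ZMod 9, x ^ 3 + y ^ 3 = 4 * z ^ 3 → 3 * z = 0 ∧ 3 * (x + y) = 0 := by
    decide
  have h9 := congrArg (Int.cast : ℤ → ZMod 9) h
  push_cast at h9
  obtain ⟨hc, hab⟩ := hmod _ _ _ h9
  have hc' := (ZMod.intCast_zmod_eq_zero_iff_dvd (3 * c) 9).mp (by exact_mod_cast hc)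
  have hab' := (ZMod.intCast_zmod_eq_zero_iff_dvd (3 * (a + b)) 9).mp (by exact_mod_cast hab)
  omega

lemma two_dvd_of_add_cubes_eq (h : a ^ 3 + b ^ 3 = 4 * c ^ 3) : 2 ∣ a + b := by
  have heven : Even (a ^ 3 + b ^ 3) := by
    rw [h]
    exact even_iff_two_dvd.mpr ⟨2 * c ^ 3, by ring⟩
  rw [← even_iff_two_dvd]
  simpa [parity_simps] using heven

lemma isCoprime_sq_add_three_mul_sq {m q : ℤ} (hmq : IsCoprime m q) (h3q : IsCoprime 3 q)
    (hodd : Odd (q ^ 2 + 3 * m ^ 2)) : IsCoprime (6 * m * q) (q ^ 2 + 3 * m ^ 2) := by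
  have h2 : IsCoprime 2 (q ^ 2 + 3 * m ^ 2) := Int.isCoprime_two_left.mpr hodd
  have h3 : IsCoprime 3 (q ^ 2 + 3 * m ^ 2) := h3q.pow_right.add_mul_left_right _
  have hm : IsCoprime m (q ^ 2 + m * (3 * m)) := hmq.pow_right.add_mul_left_right _
  have hq : IsCoprime q (3 * m ^ 2 + q * q) :=
    (h3q.symm.mul_right hmq.symm.pow_right).add_mul_left_right _
  rw [show q ^ 2 + m * (3 * m) = q ^ 2 + 3 * m ^ 2 by ring] at hm
  rw [show 3 * m ^ 2 + q * q = q ^ 2 + 3 * m ^ 2 by ring] at hq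
  exact ((h2.mul_left h3).mul_left hm).mul_left hq

/- Put `a = 3 * m + q`, `b = 3 * m - q`, `c = 3 * n`: the equation becomes
`m * (q ^ 2 + 3 * m ^ 2) = 6 * n ^ 3`, whose second factor is prime to `6 * m`. -/
lemma exists_sq_add_three_mul_sq_eq_cube (hab : IsCoprime a b) (h : a ^ 3 + b ^ 3 = 4 * c ^ 3) :
    ∃ q s t : ℤ, q ^ 2 + 3 * (6 * s ^ 3) ^ 2 = t ^ 3 ∧ IsCoprime (2 * q) t ∧ IsCoprime s q ∧
      c = 3 * (s * t) := by
  obtain ⟨⟨n, rfl⟩, h3⟩ := three_dvd_of_add_cubes_eq h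
  have h2 := two_dvd_of_add_cubes_eq h
  obtain ⟨m, q, rfl, rfl⟩ : ∃ m q, a = 3 * m + q ∧ b = 3 * m - q :=
    ⟨(a + b) / 6, (a - b) / 2, by omega, by omega⟩
  have heq : m * (q ^ 2 + 3 * m ^ 2) = 6 * n ^ 3 := by linarith
  have hodd : Odd (q ^ 2 + 3 * m ^ 2) := by
    have hne : Odd (3 * m + q) := by
      by_contra! hev
      have h2l : 2 ∣ 3 * m + q := (Int.not_odd_iff_even.mp hev).two_dvd
      have := hab.isUnit_of_dvd' h2l ((Int.dvd_add_right h2l).mp h2)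
      norm_num [Int.isUnit_iff] at this
    rw [show q ^ 2 + 3 * m ^ 2 = (3 * m + q) ^ 2 - 2 * (3 * m ^ 2 + 3 * m * q) by ring]
    exact hne.pow.sub_even (even_two_mul _)
  obtain ⟨u, v, huv⟩ := hab
  have hmq : IsCoprime m q := ⟨3 * (u + v), u - v, by linear_combination huv⟩
  have h3q : IsCoprime 3 q := ⟨(u + v) * m, u - v, by linear_combination huv⟩
  have hcop := isCoprime_sq_add_three_mul_sq hmq h3q hodd
  obtain ⟨m, rfl⟩ : (6 : ℤ) ∣ m :=
    (hcop.of_isCoprime_of_dvd_left ⟨m * q, by ring⟩).dvd_of_dvd_mul_right (Dvd.intro _ heq.symm)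
  obtain ⟨⟨s, rfl⟩, t, ht⟩ := Int.eq_pow_of_mul_eq_pow_odd (c := n)
    (hcop.of_isCoprime_of_dvd_left ⟨36 * q, by ring⟩) (by decide : Odd 3) (by linarith)
  refine ⟨q, s, t, ht, ?_, hmq.of_isCoprime_of_dvd_left ⟨6 * s ^ 2, by ring⟩, ?_⟩
  · rw [ht] at hcop
    exact (IsCoprime.pow_right_iff three_pos).mp
      (hcop.of_isCoprime_of_dvd_left ⟨18 * s ^ 3, by ring⟩)
  · have hn : n ^ 3 = (s * t) ^ 3 := by
      rw [mul_pow, ← ht]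
      linarith
    rw [(Odd.strictMono_pow (by decide : Odd 3)).injective hn]

end CubesSumFourCube

lemma exists_mul_mul_sub_eq_four_mul_cube {q s t : ℤ}
    (h : q ^ 2 + 3 * (6 * s ^ 3) ^ 2 = t ^ 3) (hqt : IsCoprime (2 * q) t) (hsq : IsCoprime s q) :
    ∃ x y : ℤ, IsCoprime x y ∧ x * y * (x - y) = 4 * s ^ 3 := by
  obtain ⟨x, y, hq, hs⟩ := exists_cube_of_sq_add_three_mul_sq h hqt
  have hxy : x * y * (x - y) = 4 * s ^ 3 := by linarith
  refine ⟨x, y, isCoprime_of_prime_dvd ?_ fun p hp hx hy => ?_, hxy⟩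
  · rintro ⟨rfl, rfl⟩
    have hs0 : s = 0 := by simpa using hxy.symm
    have hq0 : q = 0 := by simpa [hs0] using hq
    exact not_isCoprime_zero_zero (by rwa [hs0, hq0] at hsq)
  · obtain ⟨x, rfl⟩ := hx
    obtain ⟨y, rfl⟩ := hy
    have hps : p ∣ s := dvd_of_pow_three_dvd_four_mul_pow_three hp
      ⟨x * y * (x - y), by rw [← hxy]; ring⟩
    have hpq : p ∣ q + 6 * s ^ 3 := ⟨p ^ 2 * (x ^ 3 + y ^ 3 - 3 * x * y ^ 2), by rw [hq]; ring⟩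
    have hpq' : p ∣ q := (dvd_add_left ((dvd_pow hps three_ne_zero).mul_left 6)).mp hpq
    exact hp.not_isUnit (hsq.isUnit_of_dvd' hps hpq')

lemma exists_cubes_of_mul_mul_eq_four_mul_cube {u v w s : ℤ} (huv : IsCoprime u v)
    (huw : IsCoprime u w) (hvw : IsCoprime v w) (hw : Even w) (h : u * v * w = 4 * s ^ 3) :
    ∃ e f g : ℤ, u = e ^ 3 ∧ v = f ^ 3 ∧ w = 4 * g ^ 3 ∧ g ∣ s := by
  have huv4 : IsCoprime (u * v) (2 ^ 2) := ((huw.mul_left hvw).of_isCoprime_of_dvd_right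
    hw.two_dvd).pow_right
  obtain ⟨w, rfl⟩ : (2 ^ 2 : ℤ) ∣ w :=
    huv4.symm.dvd_of_dvd_mul_left ⟨s ^ 3, by rw [h]; norm_num⟩
  have h' : u * v * w = s ^ 3 := by linarith
  obtain ⟨⟨k, hk⟩, g, rfl⟩ := Int.eq_pow_of_mul_eq_pow_odd
    ((huw.mul_left hvw).of_isCoprime_of_dvd_right (Dvd.intro_left _ rfl)) (by decide : Odd 3) h'
  obtain ⟨⟨e, he⟩, f, hf⟩ := Int.eq_pow_of_mul_eq_pow_odd huv (by decide : Odd 3) hk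
  exact ⟨e, f, g, he, hf, by norm_num,
    (Int.pow_dvd_pow_iff three_ne_zero).mp (Dvd.intro_left _ h')⟩

/- One of the pairwise coprime factors `x`, `y`, `x - y` is four times a cube and the other two are
cubes; the linear relation between the three is again an equation of the same shape. -/
lemma exists_add_cubes_of_mul_mul_sub_eq {x y s : ℤ} (hxy : IsCoprime x y)
    (h : x * y * (x - y) = 4 * s ^ 3) : ∃ e f g : ℤ, e ^ 3 + f ^ 3 = 4 * g ^ 3 ∧ g ∣ s := by
  obtain ⟨u, v, huv⟩ := hxy
  have hx : IsCoprime x (x - y) := ⟨u + v, -v, by linear_combination huv⟩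
  have hy : IsCoprime y (x - y) := ⟨u + v, u, by linear_combination huv⟩
  have hxy : IsCoprime x y := ⟨u, v, huv⟩
  rcases Int.even_or_odd x with hxe | hxo
  · obtain ⟨e, f, g, he, hf, hg, hgs⟩ := exists_cubes_of_mul_mul_eq_four_mul_cube hy hxy.symm
      hx.symm hxe (s := s) (by linarith)
    exact ⟨e, f, g, by linarith, hgs⟩
  rcases Int.even_or_odd y with hye | hyo
  · obtain ⟨e, f, g, he, hf, hg, hgs⟩ := exists_cubes_of_mul_mul_eq_four_mul_cube hx hxy
      hy.symm hye (s := s) (by linarith)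
    exact ⟨e, -f, g, by rw [Odd.neg_pow (by decide)]; linarith, hgs⟩
  · obtain ⟨e, f, g, he, hf, hg, hgs⟩ := exists_cubes_of_mul_mul_eq_four_mul_cube hxy hx hy
      (hxo.sub_odd hyo) h
    exact ⟨e, -f, g, by rw [Odd.neg_pow (by decide)]; linarith, hgs⟩

lemma exists_smaller_add_cubes {a b c : ℤ} (hc : c ≠ 0) (h : a ^ 3 + b ^ 3 = 4 * c ^ 3) :
    ∃ e f g : ℤ, g ≠ 0 ∧ g.natAbs < c.natAbs ∧ e ^ 3 + f ^ 3 = 4 * g ^ 3 := by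
  by_cases hab : IsCoprime a b
  · obtain ⟨q, s, t, hst, hqt, hsq, rfl⟩ := exists_sq_add_three_mul_sq_eq_cube hab h
    obtain ⟨x, y, hxy, hs⟩ := exists_mul_mul_sub_eq_four_mul_cube hst hqt hsq
    obtain ⟨e, f, g, hefg, hgs⟩ := exists_add_cubes_of_mul_mul_sub_eq hxy hs
    have hst0 : s * t ≠ 0 := right_ne_zero_of_mul hc
    have hg : g ∣ s * t := hgs.mul_right t
    have hle := Nat.le_of_dvd (Int.natAbs_pos.mpr hst0) (Int.natAbs_dvd_natAbs.mpr hg)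
    exact ⟨e, f, g, ne_zero_of_dvd_ne_zero hst0 hg, by omega, hefg⟩
  · have hab0 : ¬ (a = 0 ∧ b = 0) := by
      rintro ⟨rfl, rfl⟩
      simp [hc] at h
    obtain ⟨p, hp, ⟨a, rfl⟩, b, rfl⟩ : ∃ p, Prime p ∧ p ∣ a ∧ p ∣ b := by
      by_contra! hp
      exact hab (isCoprime_of_prime_dvd hab0 hp)
    obtain ⟨c, rfl⟩ : p ∣ c := dvd_of_pow_three_dvd_four_mul_pow_three hp
      ⟨a ^ 3 + b ^ 3, by rw [← h]; ring⟩
    have hc0 := right_ne_zero_of_mul hc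
    refine ⟨a, b, c, hc0, ?_, mul_left_cancel₀ (pow_ne_zero 3 hp.ne_zero) (by linear_combination h)⟩
    rw [Int.natAbs_mul]
    exact lt_mul_of_one_lt_left (Int.natAbs_pos.mpr hc0) (Int.prime_iff_natAbs_prime.mp hp).one_lt

theorem eq_zero_of_add_cubes_eq_four_mul_cube {a b c : ℤ} (h : a ^ 3 + b ^ 3 = 4 * c ^ 3) :
    c = 0 := by
  induction hn : c.natAbs using Nat.strong_induction_on generalizing a b c with
  | _ n ih =>
    by_contra hc
    obtain ⟨e, f, g, hg, hlt, hefg⟩ := exists_smaller_add_cubes hc h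
    exact hg (ih _ (hn ▸ hlt) hefg rfl)

lemma rat_add_cubes_ne_four (u v : ℚ) : u ^ 3 + v ^ 3 ≠ 4 := by
  intro h
  have hu : (u.den : ℚ) ≠ 0 := by exact_mod_cast u.den_nz
  have hv : (v.den : ℚ) ≠ 0 := by exact_mod_cast v.den_nz
  have hint : ((u.num * v.den : ℤ) : ℚ) ^ 3 + ((v.num * u.den : ℤ) : ℚ) ^ 3 =
      4 * ((u.den * v.den : ℤ) : ℚ) ^ 3 := by
    rw [← Rat.num_div_den u, ← Rat.num_div_den v] at h
    field_simp at h
    push_cast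
    linear_combination h
  have hzero : (u.den * v.den : ℤ) = 0 :=
    eq_zero_of_add_cubes_eq_four_mul_cube (by exact_mod_cast hint)
  exact mul_ne_zero hu hv (by exact_mod_cast hzero)

/- With `u = (18 + y) / (3 * x)` and `v = (18 - y) / (3 * x)` the curve becomes
`u ^ 3 + v ^ 3 = 4`. -/
theorem rat_sq_ne_cube_sub (x y : ℚ) : y ^ 2 ≠ x ^ 3 - 108 := by
  intro h
  have hx : x ≠ 0 := by
    rintro rfl
    nlinarith [sq_nonneg y]
  apply rat_add_cubes_ne_four ((18 + y) / (3 * x)) ((18 - y) / (3 * x))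
  field_simp
  linear_combination 108 * h

/-! ### The curve `v ^ 2 = r * (r ^ 2 - 2 * r + 5)` -/

lemma isCoprime_of_mul_eq_squarefree_mul {R : Type*} [CommRing R] [IsDomain R]
    [IsPrincipalIdealRing R] {u v d m : R} (hd : Squarefree d) (h : u * v = d * m)
    (hm : IsCoprime (u + v) m) : IsCoprime u v := by
  refine isCoprime_of_prime_dvd ?_ fun p hp hu hv => hp.not_isUnit (hd p ?_)
  · rintro ⟨rfl, rfl⟩
    rw [zero_mul, zero_eq_mul] at h
    rcases h with rfl | rfl
    · exact hd.ne_zero rfl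
    · exact not_isCoprime_zero_zero (by simpa using hm)
  · have hpm : IsCoprime p m := hm.of_isCoprime_of_dvd_left (dvd_add hu hv)
    exact (hpm.mul_left hpm).dvd_of_dvd_mul_right (h ▸ mul_dvd_mul hu hv)

lemma exists_eq_pow_of_mul_eq_pow_of_nonneg {x y z : ℤ} {n : ℕ} (hxy : IsCoprime x y)
    (h : x * y = z ^ n) (hx : 0 ≤ x) : ∃ r, x = r ^ n := by
  obtain ⟨r, hr⟩ := exists_associated_pow_of_mul_eq_pow' hxy h
  refine ⟨|r|, ?_⟩
  rw [← abs_pow, Int.abs_eq_natAbs, Int.associated_iff_natAbs.mp hr, ← Int.abs_eq_natAbs,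
    abs_of_nonneg hx]

lemma exists_pow_pow_of_mul_eq_pow {x y z : ℤ} {n : ℕ} (hxy : IsCoprime x y) (h : x * y = z ^ n)
    (hx : 0 ≤ x) (hy : 0 ≤ y) : ∃ r s, x = r ^ n ∧ y = s ^ n := by
  obtain ⟨r, hr⟩ := exists_eq_pow_of_mul_eq_pow_of_nonneg hxy h hx
  obtain ⟨s, hs⟩ := exists_eq_pow_of_mul_eq_pow_of_nonneg hxy.symm (mul_comm x y ▸ h) hy
  exact ⟨r, s, hr, hs⟩

lemma pos_and_pos_of_mul_pos_of_add_pos {x y : ℤ} (hmul : 0 < x * y) (hadd : 0 < x + y) :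
    0 < x ∧ 0 < y := by
  rcases mul_pos_iff.mp hmul with h | h
  · exact h
  · omega

lemma sq_eq_of_pow_four_eq {x y : ℤ} (h : x ^ 4 = y ^ 4) : x ^ 2 = y ^ 2 :=
  (sq_eq_sq₀ (sq_nonneg x) (sq_nonneg y)).mp (by linarith)

lemma ne_zero_and_ne_zero_of_sq_eq {x y z : ℤ} (hz : z ≠ 0) (h : z ^ 2 = x ^ 2 * y ^ 2) :
    x ≠ 0 ∧ y ≠ 0 := by
  rw [← mul_pow] at h
  exact mul_ne_zero_iff.mp fun hxy => hz (by simpa [hxy] using h)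

lemma prime_five : Prime (5 : ℤ) := by norm_num

lemma exists_fourth_powers_of_mul_eq_five_mul {u v k : ℤ} (hk : IsCoprime (u + v) k)
    (hk0 : k ≠ 0) (h : u * v = 5 * k ^ 4) (hpos : 0 < u + v) :
    ∃ g l : ℤ, IsCoprime g l ∧ k ^ 2 = g ^ 2 * l ^ 2 ∧ u + v = 5 * g ^ 4 + l ^ 4 := by
  have huv : IsCoprime u v :=
    isCoprime_of_mul_eq_squarefree_mul prime_five.squarefree h hk.pow_right
  wlog hu : 5 ∣ u generalizing u v
  · have hv : 5 ∣ v := (prime_five.dvd_mul.mp (Dvd.intro _ h.symm)).resolve_left hu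
    rw [add_comm] at hk hpos ⊢
    exact this hk (by rw [mul_comm, h]) hpos huv.symm hv
  obtain ⟨u, rfl⟩ := hu
  obtain ⟨hu, hv⟩ := pos_and_pos_of_mul_pos_of_add_pos (h ▸ by positivity) hpos
  have huv' : IsCoprime u v := huv.of_isCoprime_of_dvd_left (Dvd.intro_left _ rfl)
  have h' : u * v = k ^ 4 := by linarith
  obtain ⟨g, l, rfl, rfl⟩ := exists_pow_pow_of_mul_eq_pow huv' h' (by omega) hv.le
  refine ⟨g, l, (IsCoprime.pow_iff four_pos four_pos).mp huv', ?_, rfl⟩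
  rw [← mul_pow]
  exact sq_eq_of_pow_four_eq (by rw [mul_pow, h'])

section QuarticDescent

variable {a b p q w : ℤ}

/- The two factors of `w ^ 2 - (a ^ 2 - b ^ 2) ^ 2 = 4 * b ^ 4`, halved, are fourth powers. -/
lemma exists_of_quartic_eq_sq (hab : IsCoprime a b) (hb : b ≠ 0)
    (h : a ^ 4 - 2 * a ^ 2 * b ^ 2 + 5 * b ^ 4 = w ^ 2) :
    ∃ p q : ℤ, IsCoprime p q ∧ b ^ 2 = p ^ 2 * q ^ 2 ∧
      a ^ 2 = p ^ 4 + p ^ 2 * q ^ 2 - q ^ 4 := by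
  wlog hw : 0 < w generalizing w
  · refine this (w := -w) (by rw [h, neg_sq]) (neg_pos.mpr (lt_of_le_of_ne (not_lt.mp hw) ?_))
    rintro rfl
    nlinarith [sq_nonneg (a ^ 2 - b ^ 2), pow_pos (sq_pos_of_ne_zero hb) 2]
  have hpar : Even (w - (a ^ 2 - b ^ 2)) := by
    have hev : Even (w ^ 2 - (a ^ 2 - b ^ 2) ^ 2) := ⟨2 * b ^ 4, by rw [← h]; ring⟩
    simpa [parity_simps] using hev
  obtain ⟨u, hu⟩ := hpar
  set v := u + (a ^ 2 - b ^ 2) with hv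
  have huv : u * v = b ^ 4 := by
    have : w = 2 * u + (a ^ 2 - b ^ 2) := by linarith
    rw [this] at h
    linarith
  have hwb : IsCoprime w b := by
    have : IsCoprime (w ^ 2) b := by
      rw [← h, show a ^ 4 - 2 * a ^ 2 * b ^ 2 + 5 * b ^ 4 =
        a ^ 4 + b * (-2 * a ^ 2 * b + 5 * b ^ 3) by ring]
      exact hab.pow_left.add_mul_left_left _
    exact (IsCoprime.pow_left_iff two_pos).mp this
  have hsum : u + v = w := by linarith
  have hcop : IsCoprime v u := (isCoprime_of_mul_eq_squarefree_mul squarefree_one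
    (by rw [huv, one_mul]) (hsum ▸ hwb.pow_right)).symm
  obtain ⟨hupos, hvpos⟩ := pos_and_pos_of_mul_pos_of_add_pos (huv ▸ by positivity) (hsum ▸ hw)
  obtain ⟨p, q, hp, hq⟩ :=
    exists_pow_pow_of_mul_eq_pow hcop (by rw [mul_comm, huv]) hvpos.le hupos.le
  have hbpq : b ^ 2 = p ^ 2 * q ^ 2 := by
    rw [← mul_pow]
    exact sq_eq_of_pow_four_eq (by rw [mul_pow, ← hp, ← hq, ← huv, mul_comm])
  rw [hp, hq] at hcop
  exact ⟨p, q, (IsCoprime.pow_iff four_pos four_pos).mp hcop, hbpq, by linarith⟩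

lemma exists_of_sq_eq_of_odd (hpq : IsCoprime p q) (hq : Odd q)
    (h : a ^ 2 = p ^ 4 + p ^ 2 * q ^ 2 - q ^ 4) :
    ∃ g l : ℤ, IsCoprime g l ∧ q ^ 2 = g ^ 2 * l ^ 2 ∧
      l ^ 4 - 2 * l ^ 2 * g ^ 2 + 5 * g ^ 4 = (2 * p) ^ 2 := by
  have hq0 : q ≠ 0 := by
    rintro rfl
    simp at hq
  have hsum : (2 * p ^ 2 + q ^ 2 - 2 * a) + (2 * p ^ 2 + q ^ 2 + 2 * a) =
      2 ^ 2 * p ^ 2 + q * (2 * q) := by ring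
  obtain ⟨g, l, hgl, hqgl, hgl'⟩ := exists_fourth_powers_of_mul_eq_five_mul
    (u := 2 * p ^ 2 + q ^ 2 - 2 * a) (v := 2 * p ^ 2 + q ^ 2 + 2 * a) (k := q)
    (by
      rw [hsum]
      exact (((Int.isCoprime_two_left.mpr hq).pow_left).mul_left hpq.pow_left).add_mul_left_left _)
    hq0 (by linear_combination -4 * h)
    (by rw [hsum]; nlinarith [sq_pos_of_ne_zero hq0, sq_nonneg p])
  exact ⟨g, l, hgl, hqgl, by linear_combination 2 * hqgl - hgl'⟩

lemma exists_of_sq_eq_of_even {k : ℤ} (hpk : IsCoprime p (2 * k)) (hk0 : k ≠ 0)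
    (h : a ^ 2 = p ^ 4 + p ^ 2 * (2 * k) ^ 2 - (2 * k) ^ 4) :
    ∃ g l : ℤ, IsCoprime g l ∧ k ^ 2 = g ^ 2 * l ^ 2 ∧
      l ^ 4 - 2 * l ^ 2 * g ^ 2 + 5 * g ^ 4 = p ^ 2 := by
  obtain ⟨u, hu⟩ : Even (p ^ 2 + 2 * k ^ 2 - a) := by
    have hev : Even ((p ^ 2 + 2 * k ^ 2) ^ 2 - a ^ 2) := ⟨10 * k ^ 4, by rw [h]; ring⟩
    simpa [parity_simps] using hev
  have hsum : u + (u + a) = p ^ 2 + k * (2 * k) := by linear_combination -hu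
  obtain ⟨g, l, hgl, hkgl, hgl'⟩ := exists_fourth_powers_of_mul_eq_five_mul
    (u := u) (v := u + a) (k := k)
    (by
      rw [hsum]
      exact (hpk.of_isCoprime_of_dvd_right (Dvd.intro_left _ rfl)).pow_left.add_mul_left_left _)
    hk0 (by
      have ha : a = p ^ 2 + 2 * k ^ 2 - 2 * u := by linarith
      rw [ha] at h ⊢
      linarith) (by rw [hsum]; nlinarith [sq_pos_of_ne_zero hk0, sq_nonneg p])
  exact ⟨g, l, hgl, hkgl, by linear_combination 2 * hkgl + hsum - hgl'⟩

lemma sq_eq_four_of_quartic_eq_sq (ha : a ^ 2 = 1) (hb : b ^ 2 = 1)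
    (h : a ^ 4 - 2 * a ^ 2 * b ^ 2 + 5 * b ^ 4 = w ^ 2) : w ^ 2 = 4 := by
  rw [← h]
  linear_combination (a ^ 2 + 1 - 2 * b ^ 2) * ha + (5 * b ^ 2 + 3) * hb

lemma sq_eq_one_of_mul_sq_le_one (hp : p ≠ 0) (ha : a ≠ 0) (hpa : p ^ 2 * a ^ 2 ≤ 1)
    (h : a ^ 4 - 2 * a ^ 2 * b ^ 2 + 5 * b ^ 4 = (2 * p) ^ 2) :
    p ^ 2 = 1 ∧ a ^ 2 = 1 ∧ b ^ 2 = 1 := by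
  have hp2 : 0 < p ^ 2 := by positivity
  have ha2 : 0 < a ^ 2 := by positivity
  have hp1 : p ^ 2 = 1 := by nlinarith
  have ha1 : a ^ 2 = 1 := by nlinarith
  have hb1 : (b ^ 2 - 1) * (5 * b ^ 2 + 3) = 0 := by
    linear_combination h + 4 * hp1 + (2 * b ^ 2 - a ^ 2 - 1) * ha1
  refine ⟨hp1, ha1, ?_⟩
  rcases mul_eq_zero.mp hb1 with hb1 | hb1 <;> nlinarith

theorem sq_eq_one_of_quartic_eq_sq (hab : IsCoprime a b) (hb : b ≠ 0)
    (h : a ^ 4 - 2 * a ^ 2 * b ^ 2 + 5 * b ^ 4 = w ^ 2) : a ^ 2 = 1 ∧ b ^ 2 = 1 := by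
  induction hn : b.natAbs using Nat.strong_induction_on generalizing a b w with
  | _ n ih =>
    have descend {g l r : ℤ} (hlt : g ^ 2 < b ^ 2) (hgl : IsCoprime g l) (hg : g ≠ 0)
        (hr : l ^ 4 - 2 * l ^ 2 * g ^ 2 + 5 * g ^ 4 = r ^ 2) : l ^ 2 = 1 ∧ g ^ 2 = 1 :=
      ih _ (hn ▸ Int.natAbs_lt_iff_sq_lt.mpr hlt) hgl.symm hg hr rfl
    obtain ⟨p, q, hpq, hbpq, hapq⟩ := exists_of_quartic_eq_sq hab hb h
    obtain ⟨hp, hq⟩ := ne_zero_and_ne_zero_of_sq_eq hb hbpq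
    have hp2 : 0 < p ^ 2 := by positivity
    rcases Int.even_or_odd q with hqe | hqo
    · exfalso
      obtain ⟨k, rfl⟩ := hqe.two_dvd
      have hk : k ≠ 0 := right_ne_zero_of_mul hq
      obtain ⟨g, l, hgl, hkgl, hnew⟩ := exists_of_sq_eq_of_even hpq hk hapq
      obtain ⟨hg, hl⟩ := ne_zero_and_ne_zero_of_sq_eq hk hkgl
      have hg2 : 0 < g ^ 2 := by positivity
      have hl2 : 0 < l ^ 2 := by positivity
      have hlt : g ^ 2 < b ^ 2 := by
        rw [hbpq, mul_pow, hkgl]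
        nlinarith [mul_pos hp2 hl2]
      obtain ⟨hl1, hg1⟩ := descend hlt hgl hg hnew
      have hp4 := sq_eq_four_of_quartic_eq_sq hl1 hg1 hnew
      have hpe : 2 ∣ p := Int.prime_two.dvd_of_dvd_pow (n := 2) (by omega)
      have := Int.isUnit_iff.mp (hpq.isUnit_of_dvd' hpe (Dvd.intro k rfl))
      omega
    · obtain ⟨g, l, hgl, hqgl, hnew⟩ := exists_of_sq_eq_of_odd hpq hqo hapq
      obtain ⟨hg, hl⟩ := ne_zero_and_ne_zero_of_sq_eq hq hqgl
      have hg2 : 0 < g ^ 2 := by positivity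
      have hb2 : b ^ 2 = p ^ 2 * l ^ 2 * g ^ 2 := by rw [hbpq, hqgl]; ring
      obtain ⟨hp1, hl1, hg1⟩ : p ^ 2 = 1 ∧ l ^ 2 = 1 ∧ g ^ 2 = 1 := by
        by_cases hlt : g ^ 2 < b ^ 2
        · obtain ⟨hl1, hg1⟩ := descend hlt hgl hg hnew
          have hp4 := sq_eq_four_of_quartic_eq_sq hl1 hg1 hnew
          exact ⟨by linarith, hl1, hg1⟩
        · exact sq_eq_one_of_mul_sq_le_one hp hl (le_of_mul_le_mul_right (by linarith) hg2) hnew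
      have hq1 : q ^ 2 = 1 := by rw [hqgl, hg1, hl1, one_mul]
      refine ⟨?_, by rw [hbpq, hp1, hq1, one_mul]⟩
      rw [hapq]
      linear_combination (p ^ 2 + 1 + q ^ 2) * hp1 - q ^ 2 * hq1

end QuarticDescent

lemma exists_coprime_eq_div (q : ℚ) : ∃ X Y : ℤ, IsCoprime X Y ∧ 0 < Y ∧ q = X / Y :=
  ⟨q.num, q.den, Rat.isCoprime_num_den q, by exact_mod_cast q.pos, (Rat.num_div_den q).symm⟩

lemma exists_sq_eq_of_cast_eq_sq {n : ℤ} {q : ℚ} (h : (n : ℚ) = q ^ 2) : ∃ m : ℤ, n = m ^ 2 := by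
  obtain ⟨m, hm⟩ := Rat.isSquare_intCast_iff.mp ⟨q, by rw [h, sq]⟩
  exact ⟨m, by rw [hm, sq]⟩

lemma eq_of_sq_eq_mul_of_not_dvd {X Y s : ℤ} (hXY : IsCoprime X (Y ^ 2)) (hX : 0 < X)
    (hY : Y ≠ 0) (h5 : ¬ 5 ∣ X) (h : X * (X ^ 2 - 2 * X * Y ^ 2 + 5 * Y ^ 4) = s ^ 2) :
    X = Y ^ 2 := by
  have hcop : IsCoprime X (X ^ 2 - 2 * X * Y ^ 2 + 5 * Y ^ 4) := by
    rw [show X ^ 2 - 2 * X * Y ^ 2 + 5 * Y ^ 4 = 5 * (Y ^ 2) ^ 2 + X * (X - 2 * Y ^ 2) by ring]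
    exact (((prime_five.coprime_iff_not_dvd.mpr h5).symm).mul_right
      hXY.pow_right).add_mul_left_right _
  obtain ⟨a, w, rfl, hw⟩ := exists_pow_pow_of_mul_eq_pow hcop h hX.le
    (by nlinarith [sq_nonneg (X - Y ^ 2), sq_nonneg (Y ^ 2)])
  obtain ⟨ha, hY⟩ := sq_eq_one_of_quartic_eq_sq ((IsCoprime.pow_iff two_pos two_pos).mp hXY) hY
    (by rw [← hw]; ring)
  rw [ha, hY]

lemma eq_five_mul_of_sq_eq_mul_of_dvd {X Y s : ℤ} (hXY : IsCoprime X (Y ^ 2)) (hX : 0 < X)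
    (h5 : 5 ∣ X) (h : X * (X ^ 2 - 2 * X * Y ^ 2 + 5 * Y ^ 4) = s ^ 2) :
    X = 5 * Y ^ 2 := by
  obtain ⟨X, rfl⟩ := h5
  obtain ⟨s, rfl⟩ : 5 ∣ s := prime_five.dvd_of_dvd_pow (h ▸ ((Dvd.intro _ rfl).mul_right _))
  replace hXY : IsCoprime X (Y ^ 2) := hXY.of_isCoprime_of_dvd_left (Dvd.intro_left _ rfl)
  have hcop : IsCoprime X (Y ^ 4 - 2 * Y ^ 2 * X + 5 * X ^ 2) := by
    rw [show Y ^ 4 - 2 * Y ^ 2 * X + 5 * X ^ 2 = (Y ^ 2) ^ 2 + X * (5 * X - 2 * Y ^ 2) by ring]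
    exact hXY.pow_right.add_mul_left_right _
  obtain ⟨a, w, rfl, hw⟩ := exists_pow_pow_of_mul_eq_pow (z := s) (n := 2) hcop (by linarith)
    (by omega) (by nlinarith [sq_nonneg (X - Y ^ 2), sq_nonneg X])
  have ha : a ≠ 0 := by
    rintro rfl
    simp at hX
  obtain ⟨hY, ha⟩ := sq_eq_one_of_quartic_eq_sq ((IsCoprime.pow_iff two_pos two_pos).mp hXY.symm)
    ha (by rw [← hw]; ring)
  rw [ha, hY]

theorem eq_zero_or_one_or_five_of_sq_eq {r v : ℚ} (h : v ^ 2 = r * (r ^ 2 - 2 * r + 5)) :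
    r = 0 ∨ r = 1 ∨ r = 5 := by
  refine or_iff_not_imp_left.mpr fun hr => ?_
  obtain ⟨X, Y, hXY, hY, rfl⟩ := exists_coprime_eq_div r
  have hYq : (Y : ℚ) ≠ 0 := by exact_mod_cast hY.ne'
  have hX0 : X ≠ 0 := by
    rintro rfl
    simp at hr
  obtain ⟨S, hS⟩ : ∃ S : ℤ, Y * (X * (X ^ 2 - 2 * X * Y + 5 * Y ^ 2)) = S ^ 2 :=
    exists_sq_eq_of_cast_eq_sq (q := v * Y ^ 2) (by
      push_cast
      rw [mul_pow, h]
      field_simp)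
  have hQ : 0 < X ^ 2 - 2 * X * Y + 5 * Y ^ 2 := by nlinarith [sq_nonneg (X - Y)]
  have hX : 0 < X := by
    have hXQ : 0 ≤ X * (X ^ 2 - 2 * X * Y + 5 * Y ^ 2) :=
      nonneg_of_mul_nonneg_right (hS ▸ sq_nonneg S) hY
    exact (nonneg_of_mul_nonneg_left hXQ hQ).lt_of_ne' hX0
  have hcop : IsCoprime Y (X * (X ^ 2 - 2 * X * Y + 5 * Y ^ 2)) := by
    rw [show X * (X ^ 2 - 2 * X * Y + 5 * Y ^ 2) = X ^ 3 + Y * (X * (5 * Y - 2 * X)) by ring]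
    exact hXY.symm.pow_right.add_mul_left_right _
  obtain ⟨b, s, rfl, hs⟩ := exists_pow_pow_of_mul_eq_pow hcop hS hY.le (by positivity)
  have hs' : X * (X ^ 2 - 2 * X * b ^ 2 + 5 * b ^ 4) = s ^ 2 := by rw [← hs]; ring
  by_cases h5 : 5 ∣ X
  · right
    rw [eq_five_mul_of_sq_eq_mul_of_dvd hXY hX h5 hs', div_eq_iff hYq]
    push_cast
    rfl
  · left
    rw [eq_of_sq_eq_mul_of_not_dvd hXY hX (by rintro rfl; simp at hY) h5 hs', div_self hYq]

/-! ### The curve `y ^ 2 = (x ^ 3 - 108) * (x ^ 2 + 8 * x + 20)` -/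

lemma exists_squarefree_of_mul_eq_sq {P Q s : ℤ} (hP : 0 < P) (h : P * Q = s ^ 2) :
    ∃ d A B : ℤ, 0 < d ∧ Squarefree d ∧ P = d * A ^ 2 ∧ Q = d * B ^ 2 := by
  obtain ⟨d, A, hdA, hd⟩ := Nat.sq_mul_squarefree P.natAbs
  have hPd : P = d * (A : ℤ) ^ 2 := by
    rw [← Int.natAbs_of_nonneg hP.le, ← hdA]
    push_cast
    ring
  have hd' : Squarefree (d : ℤ) := Int.squarefree_natCast.mpr hd
  have hA : (A : ℤ) ≠ 0 := by
    rintro hA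
    simp [hA, hPd] at hP
  obtain ⟨s, rfl⟩ : (A : ℤ) ∣ s := by
    rw [← Int.pow_dvd_pow_iff two_ne_zero, ← h, hPd]
    exact ⟨d * Q, by ring⟩
  have hdQ : d * Q = s ^ 2 := by
    apply mul_left_cancel₀ (pow_ne_zero 2 hA)
    rw [← mul_pow, ← h, hPd]
    ring
  obtain ⟨B, rfl⟩ : (d : ℤ) ∣ s :=
    (hd'.dvd_pow_iff_dvd two_ne_zero).mp ⟨Q, hdQ.symm⟩
  refine ⟨d, A, B, Int.natCast_pos.mpr (Nat.pos_of_ne_zero hd.ne_zero), hd', hPd, ?_⟩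
  apply mul_left_cancel₀ hd'.ne_zero
  rw [hdQ]
  ring

lemma not_dvd_of_squarefree_mul {p e : ℤ} (hp : Prime p) (hpe : Squarefree (p * e)) : ¬ p ∣ e := by
  rintro ⟨e, rfl⟩
  exact hp.not_isUnit (hpe p ⟨e, by ring⟩)

lemma seventeen_dvd_of_dvd_sq_sub {u v : ℤ} (h : 17 ∣ u ^ 2 - 7 * v ^ 2) : 17 ∣ u ∧ 17 ∣ v := by
  have hmod : ∀ u v : ZMod 17, u ^ 2 - 7 * v ^ 2 = 0 → u = 0 ∧ v = 0 := by decide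
  simpa [ZMod.intCast_zmod_eq_zero_iff_dvd] using
    hmod u v (by exact_mod_cast (ZMod.intCast_zmod_eq_zero_iff_dvd _ 17).mpr h)

lemma natAbs_emod_sixty {k Z : ℤ} (hZ8 : 8 ∣ Z - 1) (hZ5 : Z % 5 = 1 ∨ Z % 5 = 4)
    (hZ3 : Z % 3 = 1) (hk5 : 5 ∣ k + 2 * Z) (hk6 : k % 6 = 5) :
    (4 * k - Z).natAbs % 60 = 19 ∨ (4 * k - Z).natAbs % 60 = 29 ∨
      (4 * k - Z).natAbs % 60 = 31 ∨ (4 * k - Z).natAbs % 60 = 41 := by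
  have h12 : (4 * k - Z) % 12 = 7 := by omega
  have h5 : (4 * k - Z) % 5 = 1 ∨ (4 * k - Z) % 5 = 4 := by omega
  generalize 4 * k - Z = n at *
  clear hZ8 hZ5 hZ3 hk5 hk6
  omega

lemma jacobiSym_ne_neg_one_of_dvd {D u v n : ℤ} (hv : IsCoprime v n)
    (h : n ∣ D * u ^ 2 - v ^ 2) : jacobiSym D n.natAbs ≠ -1 := by
  intro hD
  have hv' : v.gcd n.natAbs = 1 := by
    rwa [Int.gcd, Int.natAbs_natCast, ← Int.gcd, ← Int.isCoprime_iff_gcd_eq_one]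
  have hmod : jacobiSym (D * u ^ 2) n.natAbs = jacobiSym (v ^ 2) n.natAbs :=
    jacobiSym.mod_left' (Int.emod_eq_emod_iff_emod_sub_eq_zero.mpr
      (Int.emod_eq_zero_of_dvd (Int.natAbs_dvd.mpr h)))
  rw [jacobiSym.mul_left, jacobiSym.pow_left, jacobiSym.pow_left, jacobiSym.sq_one hv', hD] at hmod
  linarith [sq_nonneg (jacobiSym u n.natAbs)]

lemma jacobiSym_ten_eq_neg_one {n : ℕ}
    (h : n % 40 = 11 ∨ n % 40 = 17 ∨ n % 40 = 19 ∨ n % 40 = 33) : jacobiSym 10 n = -1 := by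
  rw [jacobiSym.mod_right 10 (Nat.odd_iff.mpr (by omega)), show 4 * (10 : ℤ).natAbs = 40 from rfl]
  rcases h with h | h | h | h <;> rw [h] <;> norm_num

lemma jacobiSym_fifteen_eq_neg_one {n : ℕ}
    (h : n % 60 = 19 ∨ n % 60 = 29 ∨ n % 60 = 31 ∨ n % 60 = 41) : jacobiSym 15 n = -1 := by
  rw [jacobiSym.mod_right 15 (Nat.odd_iff.mpr (by omega)), show 4 * (15 : ℤ).natAbs = 60 from rfl]
  rcases h with h | h | h | h <;> rw [h] <;> norm_num

/-- An integral point above `x = X / z ^ 2` on the cover by `d` of the curve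
`y ^ 2 = (x ^ 3 - 108) * (x ^ 2 + 8 * x + 20)`: both factors of the right-hand side are `d` times
a square. -/
structure CoverPoint (d X z A B : ℤ) : Prop where
  coprime : IsCoprime X (z ^ 2)
  cubic : X ^ 3 - 108 * (z ^ 2) ^ 3 = d * A ^ 2
  quadratic : X ^ 2 + 8 * X * z ^ 2 + 20 * (z ^ 2) ^ 2 = d * B ^ 2

namespace CoverPoint

variable {d X z A B : ℤ}

lemma not_dvd_of_dvd (h : CoverPoint d X z A B) {p : ℤ} (hp : Prime p) (hX : p ∣ X) :
    ¬ p ∣ z := fun hz =>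
  hp.not_isUnit (h.coprime.isUnit_of_dvd' hX (dvd_pow hz two_ne_zero))

/- The cofactors are Bézout coefficients for the two factors, whose resultant is `5780`. -/
lemma mul_eq (h : CoverPoint d X z A B) :
    d * (484 * (z ^ 2) ^ 2 * B ^ 2 - (11 * X + 75 * z ^ 2) * (A ^ 2 - (X - 8 * z ^ 2) * B ^ 2)) =
      5780 * (z ^ 2) ^ 4 := by
  linear_combination -(484 * (z ^ 2) ^ 2 + (11 * X + 75 * z ^ 2) * (X - 8 * z ^ 2)) * h.quadratic +
    (11 * X + 75 * z ^ 2) * h.cubic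

lemma isCoprime (h : CoverPoint d X z A B) : IsCoprime d (z ^ 2) := by
  have hX : IsCoprime (X ^ 2 + 8 * X * z ^ 2 + 20 * (z ^ 2) ^ 2) (z ^ 2) := by
    rw [show X ^ 2 + 8 * X * z ^ 2 + 20 * (z ^ 2) ^ 2 =
      X ^ 2 + z ^ 2 * (8 * X + 20 * z ^ 2) by ring]
    exact h.coprime.pow_left.add_mul_left_left _
  exact (h.quadratic ▸ hX).of_mul_left_left

lemma dvd_resultant (h : CoverPoint d X z A B) : d ∣ 5780 :=
  h.isCoprime.pow_right.dvd_of_dvd_mul_right (Dvd.intro _ h.mul_eq)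

lemma not_two_dvd (h : CoverPoint d X z A B) (hd : Squarefree d) : ¬ 2 ∣ d := by
  rintro ⟨d, rfl⟩
  have hcubic := h.cubic
  obtain ⟨X, rfl⟩ : 2 ∣ X := Int.prime_two.dvd_of_dvd_pow (n := 3)
    ⟨d * A ^ 2 + 54 * (z ^ 2) ^ 3, by linarith⟩
  obtain ⟨A, rfl⟩ : 2 ∣ A := by
    have hdA : 2 ∣ d * A ^ 2 := ⟨2 * X ^ 3 - 27 * (z ^ 2) ^ 3, by linarith⟩
    exact Int.prime_two.dvd_of_dvd_pow ((Int.prime_two.dvd_or_dvd hdA).resolve_left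
      (not_dvd_of_squarefree_mul Int.prime_two hd))
  have hz : 2 ∣ 27 * (z ^ 2) ^ 3 := ⟨X ^ 3 - d * A ^ 2, by linarith⟩
  rw [← pow_mul] at hz
  exact h.not_dvd_of_dvd Int.prime_two (Dvd.intro _ rfl)
    (Int.prime_two.dvd_of_dvd_pow ((Int.prime_two.dvd_or_dvd hz).resolve_left (by norm_num)))

lemma seventeen_dvd_sub (h : CoverPoint (17 * d) X z A B) : 17 ∣ X - 5 * z ^ 2 := by
  have hmod : ∀ x w : ZMod 17, x ^ 3 - 108 * w ^ 3 = 0 → x ^ 2 + 8 * x * w + 20 * w ^ 2 = 0 →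
      x - 5 * w = 0 := by decide
  have hcast {m n : ℤ} (hmn : m = 17 * d * n) : (m : ZMod 17) = 0 :=
    (ZMod.intCast_zmod_eq_zero_iff_dvd _ 17).mpr ⟨d * n, by rw [hmn]; push_cast; ring⟩
  have hcubic := hcast h.cubic
  have hquadratic := hcast h.quadratic
  push_cast at hcubic hquadratic
  refine (ZMod.intCast_zmod_eq_zero_iff_dvd _ 17).mp ?_
  push_cast
  exact hmod _ _ hcubic hquadratic

/- Modulo `17` the two factors share the root `5`, and the quotients by `17` of their values at
`5 + 17 * k` differ by the factor `7`, a non-residue. -/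
lemma not_seventeen_dvd (h : CoverPoint d X z A B) (hd : Squarefree d) : ¬ 17 ∣ d := by
  have prime_seventeen : Prime (17 : ℤ) := by norm_num
  rintro ⟨d, rfl⟩
  obtain ⟨k, hk⟩ := h.seventeen_dvd_sub
  obtain rfl : X = 5 * z ^ 2 + 17 * k := by linarith
  have hz : ¬ 17 ∣ z := fun hz => h.not_dvd_of_dvd prime_seventeen
    (((dvd_pow hz two_ne_zero).mul_left 5).add (Dvd.intro k rfl)) hz
  have hAB : 17 ∣ d * (A ^ 2 - 7 * (z * B) ^ 2) := by
    refine ⟨8 * z ^ 2 * k ^ 2 + 17 * k ^ 3 - 3 * z ^ 4 * k - 2 * z ^ 6, ?_⟩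
    linarith [h.cubic, congrArg (z ^ 2 * ·) h.quadratic]
  obtain ⟨⟨A, rfl⟩, hB⟩ := seventeen_dvd_of_dvd_sq_sub
    ((prime_seventeen.dvd_or_dvd hAB).resolve_left (not_dvd_of_squarefree_mul prime_seventeen hd))
  obtain ⟨B, rfl⟩ := (prime_seventeen.dvd_or_dvd hB).resolve_left hz
  have h17 : 17 ∣ 20 * (z ^ 2) ^ 4 := ⟨d * (484 * (z ^ 2) ^ 2 * B ^ 2 -
    (11 * (5 * z ^ 2 + 17 * k) + 75 * z ^ 2) * (A ^ 2 - (5 * z ^ 2 + 17 * k - 8 * z ^ 2) * B ^ 2)),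
    by linarith [h.mul_eq]⟩
  rw [← pow_mul] at h17
  exact hz (prime_seventeen.dvd_of_dvd_pow
    ((prime_seventeen.dvd_or_dvd h17).resolve_left (by norm_num)))

lemma not_dvd_of_natAbs_emod_forty (h : CoverPoint 5 X z A B) {n : ℤ} (hn : n.natAbs % 40 = 11 ∨
    n.natAbs % 40 = 17 ∨ n.natAbs % 40 = 19 ∨ n.natAbs % 40 = 33) : ¬ n ∣ X + 2 * z ^ 2 := by
  rintro ⟨e, he⟩
  have hz : IsCoprime (z ^ 2) n := by
    have := h.coprime.symm.add_mul_left_right 2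
    rw [mul_comm (z ^ 2), he] at this
    exact this.of_mul_right_left
  refine jacobiSym_ne_neg_one_of_dvd (u := 5 * B) (v := 20 * z ^ 2) (.mul_left ?_ hz)
    ⟨e * 50 * (X + 6 * z ^ 2), ?_⟩ (jacobiSym_ten_eq_neg_one hn)
  · have h2 : IsCoprime 2 n := (Int.prime_two.coprime_iff_not_dvd).mpr (by omega)
    have h5 : IsCoprime 5 n := (prime_five.coprime_iff_not_dvd).mpr (by omega)
    exact (h2.mul_left h2).mul_left h5
  · linear_combination (-50 : ℤ) * h.quadratic + 50 * (X + 6 * z ^ 2) * he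

lemma not_dvd_of_natAbs_emod_sixty (h : CoverPoint 5 X z A B) {n : ℤ} (hn : n.natAbs % 60 = 19 ∨
    n.natAbs % 60 = 29 ∨ n.natAbs % 60 = 31 ∨ n.natAbs % 60 = 41) : ¬ n ∣ X - 6 * z ^ 2 := by
  rintro ⟨e, he⟩
  have hz : IsCoprime z n := by
    have := h.coprime.symm.add_mul_left_right (-6)
    rw [mul_comm (z ^ 2), neg_mul, ← sub_eq_add_neg, he] at this
    exact (IsCoprime.pow_left_iff two_pos).mp this.of_mul_right_left
  refine jacobiSym_ne_neg_one_of_dvd (u := A) (v := 18 * z ^ 3) (.mul_left ?_ hz.pow_left)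
    ⟨e * 3 * (X ^ 2 + 6 * X * z ^ 2 + 36 * z ^ 4), ?_⟩ (jacobiSym_fifteen_eq_neg_one hn)
  · have h2 : IsCoprime 2 n := (Int.prime_two.coprime_iff_not_dvd).mpr (by omega)
    have h3 : IsCoprime 3 n := (Int.prime_three.coprime_iff_not_dvd).mpr (by omega)
    exact (h2.mul_left h3).mul_left h3
  · linear_combination (-3 : ℤ) * h.cubic + 3 * (X ^ 2 + 6 * X * z ^ 2 + 36 * z ^ 4) * he

lemma emod_five (h : CoverPoint 5 X z A B) :
    5 ∣ X - 2 * z ^ 2 ∧ (z ^ 2 % 5 = 1 ∨ z ^ 2 % 5 = 4) := by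
  have hX : 5 ∣ X * (X - 2 * z ^ 2) :=
    ⟨B ^ 2 - 2 * X * z ^ 2 - 4 * z ^ 4, by linear_combination h.quadratic⟩
  have hz : ¬ 5 ∣ z := by
    rintro hz
    refine h.not_dvd_of_dvd prime_five (prime_five.dvd_of_dvd_pow (n := 2) ?_) hz
    obtain ⟨w, rfl⟩ := hz
    exact ⟨B ^ 2 - 5 * w ^ 2 * (8 * X + 20 * (5 * w) ^ 2), by linear_combination h.quadratic⟩
  constructor
  · refine (prime_five.dvd_or_dvd hX).resolve_left ?_
    rintro ⟨Y, rfl⟩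
    have h108 : 5 ∣ 108 * z ^ 6 := ⟨25 * Y ^ 3 - A ^ 2, by linear_combination -h.cubic⟩
    exact hz (prime_five.dvd_of_dvd_pow ((prime_five.dvd_or_dvd h108).resolve_left (by norm_num)))
  · have hfermat : 5 ∣ (z ^ 2 - 1) * (z ^ 2 + 1) := by
      rw [show (z ^ 2 - 1) * (z ^ 2 + 1) = z ^ (5 - 1) - 1 by ring]
      exact (Int.ModEq.pow_card_sub_one_eq_one Nat.prime_five
        (prime_five.coprime_iff_not_dvd.mpr hz).symm).symm.dvd
    rcases prime_five.dvd_or_dvd hfermat with h | h <;> omega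

lemma emod_three (h : CoverPoint 5 X z A B) : 3 ∣ X ∧ z ^ 2 % 3 = 1 := by
  have hmod : ∀ x w a b : ZMod 3, x ^ 3 - 108 * (w ^ 2) ^ 3 = 5 * a ^ 2 →
      x ^ 2 + 8 * x * w ^ 2 + 20 * (w ^ 2) ^ 2 = 5 * b ^ 2 → x = 0 := by decide
  have hX : 3 ∣ X := (ZMod.intCast_zmod_eq_zero_iff_dvd X 3).mp
    (hmod X z A B (by exact_mod_cast congrArg (Int.cast : ℤ → ZMod 3) h.cubic)
      (by exact_mod_cast congrArg (Int.cast : ℤ → ZMod 3) h.quadratic))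
  have hz : IsCoprime z (3 : ℕ) :=
    (Int.prime_three.coprime_iff_not_dvd.mpr (h.not_dvd_of_dvd Int.prime_three hX)).symm
  exact ⟨hX, Int.ModEq.pow_card_sub_one_eq_one Nat.prime_three hz⟩

lemma div_three_emod_three (h : CoverPoint 5 (3 * X) z A B) : X % 3 = 1 := by
  obtain ⟨A, rfl⟩ : 3 ∣ A := by
    refine Int.prime_three.dvd_of_dvd_pow (n := 2) ((Int.prime_three.dvd_or_dvd
      (a := 5) (b := A ^ 2) ?_).resolve_left (by norm_num))
    exact ⟨9 * X ^ 3 - 36 * (z ^ 2) ^ 3, by linear_combination -h.cubic⟩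
  obtain ⟨A, rfl⟩ : 3 ∣ A := by
    refine Int.prime_three.dvd_of_dvd_pow (n := 2) ((Int.prime_three.dvd_or_dvd
      (a := 5) (b := A ^ 2) ?_).resolve_left (by norm_num))
    exact ⟨X ^ 3 - 4 * (z ^ 2) ^ 3, by linarith [h.cubic]⟩
  have hX : X ^ 3 - 4 * (z ^ 2) ^ 3 = 15 * A ^ 2 := by linarith [h.cubic]
  have hz : (z ^ 2) ^ 3 ≡ 1 ^ 3 [ZMOD 3] := Int.ModEq.pow 3 h.emod_three.2
  have hX3 : X ^ 3 ≡ X [ZMOD 3] := by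
    have hmod : ∀ x : ZMod 3, x ^ 3 = x := by decide
    exact (ZMod.intCast_eq_intCast_iff _ _ 3).mp (by push_cast; exact hmod X)
  unfold Int.ModEq at hz hX3
  omega

lemma odd (h : CoverPoint 5 X z A B) : Odd z := by
  by_contra! hz
  obtain ⟨w, rfl⟩ := (Int.not_odd_iff_even.mp hz).two_dvd
  have hX : Odd X := by
    by_contra! hX
    exact h.not_dvd_of_dvd Int.prime_two (Int.not_odd_iff_even.mp hX).two_dvd (Dvd.intro _ rfl)
  have hB : Odd B := by
    by_contra! hB
    obtain ⟨b, rfl⟩ := (Int.not_odd_iff_even.mp hB).two_dvd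
    have := Int.eight_dvd_sq_sub_one_of_odd hX
    have := h.quadratic
    ring_nf at this
    omega
  have := Int.eight_dvd_sq_sub_one_of_odd hX
  have := Int.eight_dvd_sq_sub_one_of_odd hB
  have := h.quadratic
  ring_nf at this
  omega

lemma pos (h : CoverPoint 5 X z A B) : 0 < X := by
  have hz : 0 < z ^ 2 := by
    have := h.odd
    positivity [show z ≠ 0 by rintro rfl; simp at this]
  by_contra! hX
  have hX3 : X ^ 3 ≤ 0 := Odd.pow_nonpos (by decide) hX
  have hz3 : 0 < (z ^ 2) ^ 3 := by positivity
  nlinarith [h.cubic, sq_nonneg A]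

lemma emod_eight_of_odd (h : CoverPoint 5 X z A B) (hX : Odd X) : X % 8 = 1 := by
  have hA : Odd A := by
    by_contra! hA
    obtain ⟨A, rfl⟩ := (Int.not_odd_iff_even.mp hA).two_dvd
    have hX3 : 2 ∣ X ^ 3 := ⟨10 * A ^ 2 + 54 * (z ^ 2) ^ 3, by linarith [h.cubic]⟩
    exact Int.not_even_iff_odd.mpr hX (even_iff_two_dvd.mpr (Int.prime_two.dvd_of_dvd_pow hX3))
  obtain ⟨u, hu⟩ := Int.eight_dvd_sq_sub_one_of_odd hX
  obtain ⟨v, hv⟩ := Int.eight_dvd_sq_sub_one_of_odd h.odd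
  obtain ⟨w, hw⟩ := Int.eight_dvd_sq_sub_one_of_odd hA
  have hcubic : X * (8 * u + 1) - 108 * (8 * v + 1) ^ 3 = 5 * (8 * w + 1) := by
    rw [← hu, ← hv, ← hw]
    linear_combination h.cubic
  ring_nf at hcubic
  omega

lemma eight_dvd_of_even (h : CoverPoint 5 X z A B) (hX : Even X) : 8 ∣ X := by
  obtain ⟨X, rfl⟩ := hX.two_dvd
  obtain ⟨A, rfl⟩ : 2 ∣ A := by
    have : 2 ∣ 5 * A ^ 2 := ⟨4 * X ^ 3 - 54 * (z ^ 2) ^ 3, by linear_combination -h.cubic⟩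
    exact Int.prime_two.dvd_of_dvd_pow (n := 2) (by omega)
  obtain ⟨B, rfl⟩ : 2 ∣ B := by
    have : 2 ∣ 5 * B ^ 2 :=
      ⟨2 * X ^ 2 + 8 * X * z ^ 2 + 10 * (z ^ 2) ^ 2, by linear_combination -h.quadratic⟩
    exact Int.prime_two.dvd_of_dvd_pow (n := 2) (by omega)
  have hcubic : 2 * X ^ 3 - 27 * (z ^ 2) ^ 3 = 5 * A ^ 2 := by linarith [h.cubic]
  have hquadratic : X ^ 2 + 4 * X * z ^ 2 + 5 * (z ^ 2) ^ 2 = 5 * B ^ 2 := by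
    linarith [h.quadratic]
  obtain ⟨v, hv⟩ := Int.eight_dvd_sq_sub_one_of_odd h.odd
  obtain hv : z ^ 2 = 8 * v + 1 := by linarith
  rw [hv] at hcubic hquadratic
  have hA : Odd A := by
    by_contra! hA
    obtain ⟨A, rfl⟩ := (Int.not_odd_iff_even.mp hA).two_dvd
    ring_nf at hcubic
    omega
  obtain ⟨w, hw⟩ := Int.eight_dvd_sq_sub_one_of_odd hA
  obtain ⟨X, rfl⟩ : 2 ∣ X := by
    refine Int.prime_two.dvd_of_dvd_pow (n := 3) ?_
    ring_nf at hcubic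
    omega
  have hB : Odd B := by
    by_contra! hB
    obtain ⟨B, rfl⟩ := (Int.not_odd_iff_even.mp hB).two_dvd
    ring_nf at hquadratic
    omega
  obtain ⟨u, hu⟩ := Int.eight_dvd_sq_sub_one_of_odd hB
  obtain ⟨X, rfl⟩ : 2 ∣ X := by
    refine Int.prime_two.dvd_of_dvd_pow (n := 2) ?_
    ring_nf at hquadratic
    omega
  exact ⟨X, by ring⟩

lemma not_even (h : CoverPoint 5 X z A B) : ¬ Even X := by
  intro hX
  have hX0 := h.pos
  have hz0 := sq_nonneg z
  obtain ⟨hX5, hz5⟩ := h.emod_five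
  have hz8 := Int.eight_dvd_sq_sub_one_of_odd h.odd
  obtain ⟨k, rfl⟩ := h.eight_dvd_of_even hX
  rcases Int.even_or_odd' k with ⟨k, rfl | rfl⟩
  · exact h.not_dvd_of_natAbs_emod_forty (n := 8 * k + z ^ 2) (by omega) ⟨2, by ring⟩
  · obtain ⟨Y, hY⟩ := h.emod_three.1
    have hY3 := (hY ▸ h).div_three_emod_three
    obtain ⟨j, hj⟩ : ∃ j, 2 * k + 1 = 3 * (2 * j + 1) := ⟨k / 3, by omega⟩
    exact h.not_dvd_of_natAbs_emod_sixty (n := 4 * (2 * j + 1) - z ^ 2)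
      (natAbs_emod_sixty hz8 hz5 h.emod_three.2 (by omega) (by omega))
      ⟨6, by linear_combination 8 * hj⟩

lemma not_odd (h : CoverPoint 5 X z A B) : ¬ Odd X := by
  intro hX
  have hX0 := h.pos
  have hz0 := sq_nonneg z
  have hX8 := h.emod_eight_of_odd hX
  obtain ⟨s, hs⟩ := h.emod_five.1
  have hz5 := h.emod_five.2
  have hz8 := Int.eight_dvd_sq_sub_one_of_odd h.odd
  exact h.not_dvd_of_natAbs_emod_forty (by omega) dvd_rfl

lemma eq_one (h : CoverPoint d X z A B) (hd : 0 < d) (hsq : Squarefree d) : d = 1 := by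
  have h2 : IsCoprime d 2 := (Int.prime_two.coprime_iff_not_dvd.mpr (h.not_two_dvd hsq)).symm
  have h17 : IsCoprime d 17 := (Prime.coprime_iff_not_dvd (by norm_num)).mpr
    (h.not_seventeen_dvd hsq) |>.symm
  have h5 : d ∣ 5 :=
    ((h2.pow_right (n := 2)).mul_right (h17.pow_right (n := 2))).dvd_of_dvd_mul_right
      (by simpa using h.dvd_resultant)
  have hle := Int.le_of_dvd (by norm_num) h5
  have hne : d ≠ 5 := by
    rintro rfl
    exact h.not_even (Int.not_odd_iff_even.mp h.not_odd)
  interval_cases d <;> first | rfl | contradiction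

end CoverPoint

theorem sq_ne_cubic_mul_quadratic (x y : ℚ) :
    y ^ 2 ≠ (x ^ 3 - 108) * (x ^ 2 + 8 * x + 20) := by
  intro h
  obtain ⟨X, Y, hXY, hY, rfl⟩ := exists_coprime_eq_div x
  have hYq : (Y : ℚ) ≠ 0 := by exact_mod_cast hY.ne'
  set P := X ^ 3 - 108 * Y ^ 3 with hP
  set Q := X ^ 2 + 8 * X * Y + 20 * Y ^ 2 with hQ
  obtain ⟨S, hS⟩ : ∃ S : ℤ, Y * (P * Q) = S ^ 2 :=
    exists_sq_eq_of_cast_eq_sq (q := y * Y ^ 3) (by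
      push_cast [hP, hQ]
      rw [mul_pow, h]
      field_simp)
  have hQ0 : 0 < Q := by nlinarith [sq_nonneg (X + 4 * Y)]
  have hPQ : 0 ≤ P * Q := nonneg_of_mul_nonneg_right (hS ▸ sq_nonneg S) hY
  have hPeq : ((X : ℚ) / Y) ^ 3 - 108 = P / Y ^ 3 := by
    push_cast [hP]
    field_simp
  have hP0 : P ≠ 0 := fun hP0 => rat_sq_ne_cube_sub (X / Y) 0 (by rw [hPeq, hP0]; simp)
  have hcop : IsCoprime Y (P * Q) := by
    have hPQ : P * Q = X ^ 5 + Y * (8 * X ^ 4 + 20 * X ^ 3 * Y - 108 * Y ^ 2 * Q) := by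
      rw [hP, hQ]
      ring
    rw [hPQ]
    exact hXY.symm.pow_right.add_mul_left_right _
  obtain ⟨z, s, rfl, hs⟩ := exists_pow_pow_of_mul_eq_pow hcop hS hY.le hPQ
  obtain ⟨d, A, B, hd, hsq, hA, hB⟩ := exists_squarefree_of_mul_eq_sq
    ((nonneg_of_mul_nonneg_left hPQ hQ0).lt_of_ne' hP0) hs
  obtain rfl : d = 1 := CoverPoint.eq_one ⟨hXY, hA, hB⟩ hd hsq
  refine rat_sq_ne_cube_sub _ (A / z ^ 3) (Eq.symm (hPeq.trans ?_))
  rw [hA]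
  push_cast
  ring

/-! ### Generic parameters -/

/-- The cubic polynomial with parameter `m = 4 * c + 3` whose roots are the traces (sums of the
points) of the three 4-cycles of `x ^ 2 + c`. -/
noncomputable def traceCubic {R : Type*} [CommRing R] (m : R) : R[X] := X ^ 3 + C m * X + 4

/-- The discriminant of `traceCubic m`. -/
def traceDisc {R : Type*} [CommRing R] (m : R) : R := -4 * (m ^ 3 + 108)

/-- The product of `t ^ 2 + 4` over the roots `t` of `traceCubic m`. -/
def traceNorm {R : Type*} [CommRing R] (m : R) : R := 4 * (m ^ 2 - 8 * m + 20)

/-- The polynomial whose roots are the sums `u 0 + u 1 + u 2`, where `u i ^ 2` is the product of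
`t ^ 2 + 4` over the two roots `t ≠ t i` of `traceCubic m`, and `u 0 * u 1 * u 2 = traceNorm m`. -/
noncomputable def pairQuartic {R : Type*} [CommRing R] (m : R) : R[X] :=
  (X ^ 2 - C ((m - 4) * (m - 12))) ^ 2 - C (4 * traceNorm m) * (2 * X + C (12 - 2 * m))

/-- The conditions on `m = 4 * c + 3` under which the Galois group of `Phi4 c` is as large as
possible. -/
structure GenericParam {K : Type*} [Field K] (m : K) : Prop where
  not_isRoot_traceCubic (t : K) : ¬ (traceCubic m).IsRoot t
  not_isSquare_traceDisc : ¬ IsSquare (traceDisc m)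
  not_isSquare_traceNorm : ¬ IsSquare (traceNorm m)
  not_isSquare_traceNorm_mul_traceDisc : ¬ IsSquare (traceNorm m * traceDisc m)
  not_isRoot_pairQuartic (y : K) : ¬ (pairQuartic m).IsRoot y

section Basic

variable {R S : Type*} [CommRing R] [CommRing S]

lemma traceCubic_isRoot {m t : R} : (traceCubic m).IsRoot t ↔ t ^ 3 + m * t + 4 = 0 := by
  simp [traceCubic]

lemma pairQuartic_isRoot {m y : R} : (pairQuartic m).IsRoot y ↔
    (y ^ 2 - (m - 4) * (m - 12)) ^ 2 = 4 * traceNorm m * (2 * y + (12 - 2 * m)) := by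
  simp [pairQuartic, sub_eq_zero]

lemma map_traceCubic (f : R →+* S) (m : R) : (traceCubic m).map f = traceCubic (f m) := by
  simp [traceCubic]

lemma map_traceDisc (f : R →+* S) (m : R) : f (traceDisc m) = traceDisc (f m) := by
  simp [traceDisc, map_ofNat]

lemma map_traceNorm (f : R →+* S) (m : R) : f (traceNorm m) = traceNorm (f m) := by
  simp [traceNorm, map_ofNat]

lemma map_pairQuartic (f : R →+* S) (m : R) : (pairQuartic m).map f = pairQuartic (f m) := by
  simp only [pairQuartic, Polynomial.map_sub, Polynomial.map_add, Polynomial.map_mul,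
    Polynomial.map_pow, Polynomial.map_ofNat, map_X, map_C]
  rw [map_mul f 4, map_traceNorm]
  simp only [map_sub, map_mul, map_ofNat]

lemma monic_traceCubic (m : R) : (traceCubic m).Monic := by
  rw [traceCubic]
  monicity!

lemma monic_pairQuartic (m : R) : (pairQuartic m).Monic := by
  rw [pairQuartic]
  monicity!

end Basic

section Specialization

variable {R F S : Type*} [CommRing R] [IsIntegrallyClosed R] [CommRing S]
  [Field F] [Algebra R F] [IsFractionRing R F]

lemma not_isRoot_of_specialization {p : R[X]} (hp : p.Monic) (φ : R →+* S)
    (h : ∀ s, ¬ (p.map φ).IsRoot s) (y : F) : ¬ (p.map (algebraMap R F)).IsRoot y := by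
  intro hy
  obtain ⟨r, rfl⟩ := IsIntegrallyClosed.algebraMap_eq_of_integral
    (⟨p, hp, by rwa [← eval_map]⟩ : IsIntegral R y)
  exact h (φ r) ((IsRoot.of_map hy (FaithfulSMul.algebraMap_injective R F)).map)

lemma not_isSquare_of_specialization {a : R} (φ : R →+* S) (h : ¬ IsSquare (φ a)) :
    ¬ IsSquare (algebraMap R F a) := by
  rintro ⟨y, hy⟩
  refine not_isRoot_of_specialization (monic_X_pow_sub_C a two_ne_zero) φ (fun s hs => ?_) y ?_
  · exact h ⟨s, (by simpa [sub_eq_zero, sq] using hs : s * s = φ a).symm⟩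
  · simp [hy, sq]

theorem GenericParam.of_specialization {k : Type*} [Field k] (φ : R →+* k) {m : R}
    (h : GenericParam (φ m)) : GenericParam (algebraMap R F m) where
  not_isRoot_traceCubic t := by
    rw [← map_traceCubic]
    refine not_isRoot_of_specialization (monic_traceCubic m) φ (fun s => ?_) t
    rw [map_traceCubic]
    exact h.not_isRoot_traceCubic s
  not_isSquare_traceDisc := by
    rw [← map_traceDisc]
    exact not_isSquare_of_specialization φ (by
      rw [map_traceDisc]
      exact h.not_isSquare_traceDisc)
  not_isSquare_traceNorm := by
    rw [← map_traceNorm]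
    exact not_isSquare_of_specialization φ (by
      rw [map_traceNorm]
      exact h.not_isSquare_traceNorm)
  not_isSquare_traceNorm_mul_traceDisc := by
    rw [← map_traceNorm, ← map_traceDisc, ← map_mul]
    exact not_isSquare_of_specialization φ (by
      rw [map_mul, map_traceNorm, map_traceDisc]
      exact h.not_isSquare_traceNorm_mul_traceDisc)
  not_isRoot_pairQuartic y := by
    rw [← map_pairQuartic]
    refine not_isRoot_of_specialization (monic_pairQuartic m) φ (fun s => ?_) y
    rw [map_pairQuartic]
    exact h.not_isRoot_pairQuartic s

end Specialization

section Parametrizations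

variable {K : Type*} [Field K] [CharZero K] {c : K}

theorem exists_eq_eta_iff : (∃ r : K, r ≠ 0 ∧ c = (4 - 3 * r - r ^ 3) / (4 * r)) ↔
    ∃ t, (traceCubic (4 * c + 3)).IsRoot t := by
  simp_rw [traceCubic_isRoot]
  constructor
  · rintro ⟨r, hr, rfl⟩
    refine ⟨-r, ?_⟩
    field_simp
    ring
  · rintro ⟨t, ht⟩
    have ht0 : t ≠ 0 := by
      rintro rfl
      norm_num at ht
    refine ⟨-t, neg_ne_zero.mpr ht0, ?_⟩
    field_simp
    linear_combination ht

theorem exists_eq_lambda_iff : (∃ r : K, r ≠ 0 ∧ c = (r ^ 2 + 2 * r - 4) / (8 * r)) ↔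
    IsSquare (traceNorm (4 * c + 3)) := by
  constructor
  · rintro ⟨r, hr, rfl⟩
    refine ⟨(r ^ 2 + 4) / r, ?_⟩
    rw [traceNorm]
    field_simp
    ring
  · rintro ⟨y, hy⟩
    have hr : ((y + 8 * c - 2) / 2) ^ 2 + (2 - 8 * c) * ((y + 8 * c - 2) / 2) - 4 = 0 := by
      rw [traceNorm] at hy
      linear_combination -(1 / 4) * hy
    generalize (y + 8 * c - 2) / 2 = r at hr
    have hr0 : r ≠ 0 := by
      rintro rfl
      norm_num at hr
    refine ⟨r, hr0, ?_⟩
    field_simp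
    linear_combination -hr

end Parametrizations

/- In terms of `r = (y - m + 6) / 2` the quartic is quadratic in `m`, and its
discriminant is a square times `r * (r ^ 2 - 2 * r + 5)`. -/
lemma eq_three_or_eq_neg_seven_of_pairQuartic_isRoot {m y : ℚ} (h : (pairQuartic m).IsRoot y) :
    m = 3 ∨ m = -7 := by
  rw [pairQuartic_isRoot, traceNorm] at h
  obtain ⟨r, rfl⟩ : ∃ r, y = 2 * r + m - 6 := ⟨(y - m + 6) / 2, by ring⟩
  have hr : (m * (1 + r) + r ^ 2 - 6 * r - 3) ^ 2 = 4 * r * (m ^ 2 - 8 * m + 20) := by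
    linear_combination (1 / 16) * h
  have hpoint : ((r - 1) * (m + r - 3) / 2) ^ 2 = r * (r ^ 2 - 2 * r + 5) := by
    linear_combination (1 / 4) * hr
  rcases eq_zero_or_one_or_five_of_sq_eq hpoint with rfl | rfl | rfl
  · left
    have hm : (m - 3) ^ 2 = 0 := by linear_combination hr
    linarith [pow_eq_zero_iff two_ne_zero |>.mp hm]
  · norm_num at hpoint
  · have hm : (m - 3) * (m + 7) = 0 := by linear_combination (1 / 16) * hr
    exact (mul_eq_zero.mp hm).imp sub_eq_zero.mp eq_neg_of_add_eq_zero_left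

lemma not_isSquare_traceDisc (m : ℚ) : ¬ IsSquare (traceDisc m) := by
  rintro ⟨y, hy⟩
  rw [traceDisc] at hy
  exact rat_sq_ne_cube_sub (-m) (y / 2) (by linear_combination -(1 / 4) * hy)

theorem genericParam_of_not_exceptional {c : ℚ}
    (hlambda : ¬ ∃ r : ℚ, r ≠ 0 ∧ c = (r ^ 2 + 2 * r - 4) / (8 * r))
    (heta : ¬ ∃ r : ℚ, r ≠ 0 ∧ c = (4 - 3 * r - r ^ 3) / (4 * r)) (hc : c ≠ -5 / 2) :
    GenericParam (4 * c + 3) where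
  not_isRoot_traceCubic t ht := heta (exists_eq_eta_iff.mpr ⟨t, ht⟩)
  not_isSquare_traceDisc := not_isSquare_traceDisc _
  not_isSquare_traceNorm h := hlambda (exists_eq_lambda_iff.mpr h)
  not_isSquare_traceNorm_mul_traceDisc := by
    rintro ⟨y, hy⟩
    rw [traceNorm, traceDisc] at hy
    exact sq_ne_cubic_mul_quadratic (-(4 * c + 3)) (y / 4) (by linear_combination -(1 / 16) * hy)
  not_isRoot_pairQuartic y hy := by
    rcases eq_three_or_eq_neg_seven_of_pairQuartic_isRoot hy with h | h
    · exact heta ⟨1, one_ne_zero, by linarith⟩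
    · exact hc (by linarith)

lemma genericParam_seven : GenericParam (7 : ℚ) := by
  rw [show (7 : ℚ) = 4 * 1 + 3 by norm_num]
  refine genericParam_of_not_exceptional ?_ ?_ (by norm_num)
  · rw [exists_eq_lambda_iff, traceNorm]
    norm_num
  · rw [exists_eq_eta_iff, not_exists, show (4 * 1 + 3 : ℚ) = algebraMap ℤ ℚ 7 by norm_num,
      ← map_traceCubic]
    refine not_isRoot_of_specialization (monic_traceCubic 7) (Int.castRingHom (ZMod 5)) ?_
    simp_rw [map_traceCubic, traceCubic_isRoot]
    decide

theorem genericParam_ratFunc_X : GenericParam (4 * RatFunc.X + 3 : RatFunc ℚ) := by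
  have hseven : evalRingHom (1 : ℚ) (4 * X + 3) = 7 := by norm_num
  have hgeneric : GenericParam (algebraMap ℚ[X] (RatFunc ℚ) (4 * X + 3)) :=
    .of_specialization (evalRingHom 1) (hseven ▸ genericParam_seven)
  simpa only [map_add, map_mul, map_ofNat, RatFunc.algebraMap_X] using hgeneric

/-! ### Labellings of the points of period four -/

/-- The three values of `t` are the roots of `traceCubic m`, expressed by Vieta's formulas. -/
structure IsTraceTriple {R : Type*} [CommRing R] (m : R) (t : Fin 3 → R) : Prop where
  sum_eq : t 0 + t 1 + t 2 = 0
  sum_mul_eq : t 0 * t 1 + t 0 * t 2 + t 1 * t 2 = m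
  prod_eq : t 0 * t 1 * t 2 = -4

namespace IsTraceTriple

variable {R : Type*} [CommRing R] {m : R} {t : Fin 3 → R}

lemma isRoot (h : IsTraceTriple m t) (i : Fin 3) : (traceCubic m).IsRoot (t i) := by
  rw [traceCubic_isRoot]
  match i with
  | 0 => linear_combination t 0 ^ 2 * h.sum_eq - t 0 * h.sum_mul_eq + h.prod_eq
  | 1 => linear_combination t 1 ^ 2 * h.sum_eq - t 1 * h.sum_mul_eq + h.prod_eq
  | 2 => linear_combination t 2 ^ 2 * h.sum_eq - t 2 * h.sum_mul_eq + h.prod_eq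

lemma eq_neg_sub (h : IsTraceTriple m t) : t 2 = -t 0 - t 1 := by
  linear_combination h.sum_eq

lemma sum_sq_add_four (h : IsTraceTriple m t) :
    (t 0 ^ 2 + 4) + (t 1 ^ 2 + 4) + (t 2 ^ 2 + 4) = 12 - 2 * m := by
  rw [← h.sum_mul_eq, h.eq_neg_sub]
  ring

lemma sum_mul_sq_add_four (h : IsTraceTriple m t) :
    (t 1 ^ 2 + 4) * (t 2 ^ 2 + 4) + (t 0 ^ 2 + 4) * (t 2 ^ 2 + 4) +
      (t 0 ^ 2 + 4) * (t 1 ^ 2 + 4) = (m - 4) * (m - 12) := by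
  rw [← h.sum_mul_eq, h.eq_neg_sub]
  ring

lemma prod_sq_add_four (h : IsTraceTriple m t) : ∏ i, (t i ^ 2 + 4) = traceNorm m := by
  have hprod := h.prod_eq
  rw [Fin.prod_univ_three, traceNorm, ← h.sum_mul_eq]
  rw [h.eq_neg_sub] at hprod ⊢
  linear_combination (t 0 * t 1 * (-t 0 - t 1) - 4) * hprod

lemma det_vandermonde_sq (h : IsTraceTriple m t) :
    (Matrix.vandermonde t).det ^ 2 = traceDisc m := by
  have hprod := h.prod_eq
  rw [Matrix.det_fin_three, traceDisc, ← h.sum_mul_eq]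
  simp only [Matrix.vandermonde_apply, Fin.val_zero, Fin.val_one, Fin.val_two, pow_zero, pow_one]
  rw [h.eq_neg_sub] at hprod ⊢
  linear_combination -27 * (t 0 * t 1 * (-t 0 - t 1) - 4) * hprod

lemma injective [IsDomain R] (h : IsTraceTriple m t) (hm : traceDisc m ≠ 0) :
    Function.Injective t := by
  rw [← Matrix.det_vandermonde_ne_zero_iff, ← pow_ne_zero_iff two_ne_zero, h.det_vandermonde_sq]
  exact hm

lemma sq_add_four_ne_zero [IsDomain R] (h : IsTraceTriple m t) (hm : traceNorm m ≠ 0)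
    (i : Fin 3) : t i ^ 2 + 4 ≠ 0 := by
  rw [← h.prod_sq_add_four, Finset.prod_ne_zero_iff] at hm
  exact hm i (Finset.mem_univ i)

lemma of_map {S : Type*} [CommRing S] {f : R →+* S} (hf : Function.Injective f)
    (h : IsTraceTriple (f m) (f ∘ t)) : IsTraceTriple m t where
  sum_eq := hf (by simpa using h.sum_eq)
  sum_mul_eq := hf (by simpa using h.sum_mul_eq)
  prod_eq := hf (by simpa [map_ofNat] using h.prod_eq)

end IsTraceTriple

lemma exists_sq_add_mul_add_eq_zero {k : Type*} [Field k] [IsAlgClosed k] [NeZero (2 : k)]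
    (p q : k) : ∃ z, z ^ 2 + p * z + q = 0 := by
  obtain ⟨z, hz⟩ := exists_quadratic_eq_zero (one_ne_zero (α := k)) (b := p) (c := q)
    (IsAlgClosed.exists_eq_mul_self _)
  exact ⟨z, by linear_combination hz⟩

lemma exists_isTraceTriple {k : Type*} [Field k] [IsAlgClosed k] [NeZero (2 : k)] (m : k) :
    ∃ t, IsTraceTriple m t := by
  have hdegree : (traceCubic m).degree ≠ 0 := by
    rw [traceCubic, show (X ^ 3 + C m * X + 4 : k[X]).degree = 3 by compute_degree!]
    norm_num
  obtain ⟨t₀, ht₀⟩ := IsAlgClosed.exists_root _ hdegree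
  rw [traceCubic_isRoot] at ht₀
  obtain ⟨t₁, ht₁⟩ := exists_sq_add_mul_add_eq_zero t₀ (t₀ ^ 2 + m)
  refine ⟨![t₀, t₁, -t₀ - t₁], ?_, ?_, ?_⟩ <;>
    simp only [Matrix.cons_val_zero, Matrix.cons_val_one, Matrix.cons_val]
  · ring
  · linear_combination -ht₁
  · linear_combination ht₀ - t₀ * ht₁

lemma sum_zmod_four {M : Type*} [AddCommMonoid M] (f : ZMod 4 → M) :
    ∑ j, f j = f 0 + f 1 + f 2 + f 3 :=
  Fin.sum_univ_four f

/-- The sum of the points of the `i`-th cycle of a labelling. -/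
def cycleTrace {ι L : Type*} [AddCommMonoid L] (x : ι × ZMod 4 → L) (i : ι) : L := ∑ j, x (i, j)

/-- A labelling of the twelve points of exact period four of `x ^ 2 + c` by `Fin 3 × ZMod 4`: the
first index is the cycle, and `x ^ 2 + c` acts by adding one to the second. -/
structure IsCycleLabelling {L : Type*} [Field L] (c : L) (x : Fin 3 × ZMod 4 → L) : Prop where
  injective : Function.Injective x
  step (i : Fin 3) (j : ZMod 4) : x (i, j + 1) = x (i, j) ^ 2 + c
  isTraceTriple : IsTraceTriple (4 * c + 3) (cycleTrace x)

section Existence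

lemma apply_add_eq_of_semiconj {α : Type*} {n : ℕ} [NeZero n] {f : α → α} {y z : ZMod n → α}
    (hy : ∀ j, y (j + 1) = f (y j)) (hz : ∀ j, z (j + 1) = f (z j)) {a b : ZMod n}
    (hab : y a = z b) (j : ZMod n) : y (a + j) = z (b + j) := by
  suffices h : ∀ k : ℕ, y (a + k) = z (b + k) by simpa using h j.val
  intro k
  induction k with
  | zero => simpa using hab
  | succ k ih => rw [Nat.cast_succ, ← add_assoc, ← add_assoc, hy, hz, ih]

lemma injective_of_apply_zero_ne_apply_two {α : Type*} {f : α → α} {y : ZMod 4 → α}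
    (hy : ∀ j, y (j + 1) = f (y j)) (hne : y 0 ≠ y 2) : Function.Injective y := by
  intro a b hab
  by_contra! hab_ne
  have hperiod (j : ZMod 4) : y j = y (j + (b - a)) := by
    have h := apply_add_eq_of_semiconj hy hy hab (j - a)
    rwa [add_sub_cancel, show b + (j - a) = j + (b - a) by ring] at h
  have hcases : ∀ d : ZMod 4, d ≠ 0 → d = 2 ∨ d + d = 2 := by decide
  rcases hcases (b - a) (sub_ne_zero.mpr hab_ne.symm) with h | h
  · exact hne (by rw [hperiod 0, zero_add, h])
  · exact hne (by rw [hperiod 0, hperiod (0 + (b - a)), zero_add, h])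

variable {k : Type*} [Field k] [IsAlgClosed k] [NeZero (2 : k)] {c : k}

/- With `a = y 0 + y 2` and `s = y 0 - y 2`, stepping once gives `y 1 + y 3 = t - a`,
`y 1 - y 3 = a * s`, and `a * (t - a) = -1`. -/
lemma exists_cycle {t : k} (ht : (traceCubic (4 * c + 3)).IsRoot t) (htwo : t ≠ -2)
    (hsq : t ^ 2 + 4 ≠ 0) :
    ∃ y : ZMod 4 → k, (∀ j, y (j + 1) = y j ^ 2 + c) ∧ ∑ j, y j = t ∧ y 0 ≠ y 2 := by
  rw [traceCubic_isRoot] at ht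
  have h2 : (2 : k) ≠ 0 := two_ne_zero
  obtain ⟨a, ha⟩ := exists_sq_add_mul_add_eq_zero (-t) (-1)
  obtain ⟨s, hs⟩ := IsAlgClosed.exists_eq_mul_self (2 * (t - a) - a ^ 2 - 4 * c)
  have step₀ : ((t - a) + a * s) / 2 = ((a + s) / 2) ^ 2 + c := by
    field_simp
    linear_combination hs
  have step₁ : (a - s) / 2 = (((t - a) + a * s) / 2) ^ 2 + c := by
    field_simp
    linear_combination a * ht + (2 * s + a ^ 2 + (2 + t) * a + t ^ 2 + 4 * c) * ha + a ^ 2 * hs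
  have step₂ : ((t - a) - a * s) / 2 = ((a - s) / 2) ^ 2 + c := by
    field_simp
    linear_combination hs
  have step₃ : (a + s) / 2 = (((t - a) - a * s) / 2) ^ 2 + c := by
    field_simp
    linear_combination a * ht + (-2 * s + a ^ 2 + (2 + t) * a + t ^ 2 + 4 * c) * ha + a ^ 2 * hs
  refine ⟨![(a + s) / 2, ((t - a) + a * s) / 2, (a - s) / 2, ((t - a) - a * s) / 2], ?_, ?_, ?_⟩
  · intro j
    fin_cases j
    exacts [step₀, step₁, step₂, step₃]
  · refine (sum_zmod_four _).trans ?_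
    change (a + s) / 2 + ((t - a) + a * s) / 2 + (a - s) / 2 + ((t - a) - a * s) / 2 = t
    field_simp
    ring
  · change (a + s) / 2 ≠ (a - s) / 2
    intro h
    obtain rfl : s = 0 := by
      field_simp at h
      exact (mul_eq_zero.mp (by linear_combination h : 2 * s = 0)).resolve_left h2
    have hfactor : (t - 2 * a) * (t + 2) = 0 := by
      field_simp at step₁
      linear_combination hs - step₁
    rcases mul_eq_zero.mp hfactor with h | h
    · exact hsq (by linear_combination (t - 2 * a) * h - 4 * ha)
    · exact htwo (eq_neg_of_add_eq_zero_left h)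

lemma injective_of_cycleTrace_injective {ι α : Type*} [AddCommMonoid α] {f : α → α}
    {x : ι × ZMod 4 → α} (hx : ∀ i j, x (i, j + 1) = f (x (i, j)))
    (hsum : Function.Injective (cycleTrace x)) (hne : ∀ i, x (i, 0) ≠ x (i, 2)) :
    Function.Injective x := by
  rintro ⟨i, a⟩ ⟨k, b⟩ hab
  obtain rfl : i = k := by
    apply hsum
    rw [cycleTrace, cycleTrace, ← Equiv.sum_comp (Equiv.addLeft a) fun j => x (i, j),
      ← Equiv.sum_comp (Equiv.addLeft b) fun j => x (k, j)]
    exact Finset.sum_congr rfl fun j _ =>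
      apply_add_eq_of_semiconj (y := fun j => x (i, j)) (z := fun j => x (k, j))
        (hx i) (hx k) hab j
  rw [injective_of_apply_zero_ne_apply_two (y := fun j => x (i, j)) (hx i) (hne i) hab]

theorem exists_isCycleLabelling (hc : 4 * c + 5 ≠ 0) (hdisc : traceDisc (4 * c + 3) ≠ 0)
    (hnorm : traceNorm (4 * c + 3) ≠ 0) : ∃ x, IsCycleLabelling c x := by
  obtain ⟨t, ht⟩ := exists_isTraceTriple (4 * c + 3)
  have htwo (i : Fin 3) : t i ≠ -2 := by
    intro h
    have hroot := ht.isRoot i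
    rw [h, traceCubic_isRoot] at hroot
    have h2 : (2 : k) * (4 * c + 5) = 0 := by linear_combination -hroot
    exact hc ((mul_eq_zero.mp h2).resolve_left two_ne_zero)
  choose y hstep hsum hne using fun i =>
    exists_cycle (ht.isRoot i) (htwo i) (ht.sq_add_four_ne_zero hnorm i)
  have htrace : cycleTrace (fun p : Fin 3 × ZMod 4 => y p.1 p.2) = t := funext hsum
  refine ⟨fun p => y p.1 p.2, ?_, hstep, htrace ▸ ht⟩
  exact injective_of_cycleTrace_injective (f := fun z => z ^ 2 + c)
    (x := fun p => y p.1 p.2) hstep (htrace ▸ ht.injective hdisc) hne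

end Existence

section Phi4

variable {K L : Type*} [Field K] [Field L]

lemma map_phi4 (f : K →+* L) (c : K) : (Phi4 c).map f = Phi4 (f c) := by
  simp [Phi4, map_ofNat]

lemma natDegree_phi4 (c : K) : (Phi4 c).natDegree = 12 := by
  rw [Phi4]
  compute_degree!

lemma monic_phi4 (c : K) : (Phi4 c).Monic := by
  rw [Phi4]
  monicity!

lemma phi4_mul_eval (c z : K) : ((z ^ 2 + c) ^ 2 + c - z) * (Phi4 c).eval z =
    (((z ^ 2 + c) ^ 2 + c) ^ 2 + c) ^ 2 + c - z := by
  simp only [Phi4, eval_add, eval_mul, eval_pow, eval_X, eval_C]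
  ring

end Phi4

namespace IsCycleLabelling

variable {L : Type*} [Field L] {c : L} {x : Fin 3 × ZMod 4 → L}

lemma isRoot (h : IsCycleLabelling c x) (p : Fin 3 × ZMod 4) : (Phi4 c).IsRoot (x p) := by
  obtain ⟨i, j⟩ := p
  have htwice : (x (i, j) ^ 2 + c) ^ 2 + c ≠ x (i, j) := by
    rw [← h.step, ← h.step, h.injective.ne_iff, ne_eq, Prod.mk.injEq, not_and]
    intro _
    revert j
    decide
  have hfour : (((x (i, j) ^ 2 + c) ^ 2 + c) ^ 2 + c) ^ 2 + c = x (i, j) := by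
    have hperiod : ∀ j : ZMod 4, j + 1 + 1 + 1 + 1 = j := by decide
    rw [← h.step, ← h.step, ← h.step, ← h.step, hperiod]
  have heval := phi4_mul_eval c (x (i, j))
  rw [hfour, sub_self] at heval
  exact (mul_eq_zero.mp heval).resolve_left (sub_ne_zero.mpr htwice)

lemma roots_eq (h : IsCycleLabelling c x) : (Phi4 c).roots = Finset.univ.val.map x := by
  refine (Multiset.eq_of_le_of_card_le ?_ ?_).symm
  · refine (Multiset.le_iff_subset (Finset.univ.nodup.map h.injective)).mpr ?_
    intro z hz
    obtain ⟨p, -, rfl⟩ := Multiset.mem_map.mp hz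
    exact (mem_roots (monic_phi4 c).ne_zero).mpr (h.isRoot p)
  · refine (card_roots' _).trans ?_
    rw [natDegree_phi4, Multiset.card_map, Finset.card_val, Finset.card_univ, Fintype.card_prod,
      ZMod.card, Fintype.card_fin]

lemma isRoot_iff (h : IsCycleLabelling c x) {z : L} : (Phi4 c).IsRoot z ↔ ∃ p, x p = z := by
  rw [← mem_roots (monic_phi4 c).ne_zero, h.roots_eq]
  simp

lemma diagonal (h : IsCycleLabelling c x) (i : Fin 3) :
    (x (i, 0) + x (i, 2)) * (x (i, 1) + x (i, 3)) = -1 := by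
  have hne : x (i, 2) - x (i, 0) ≠ 0 := by
    rw [sub_ne_zero, h.injective.ne_iff, ne_eq, Prod.mk.injEq, not_and]
    intro _
    decide
  apply mul_left_cancel₀ hne
  have step₀ : x (i, 1) = x (i, 0) ^ 2 + c := h.step i 0
  have step₁ : x (i, 2) = x (i, 1) ^ 2 + c := h.step i 1
  have step₂ : x (i, 3) = x (i, 2) ^ 2 + c := h.step i 2
  have step₃ : x (i, 0) = x (i, 3) ^ 2 + c := h.step i 3
  linear_combination (x (i, 1) + x (i, 3)) * (step₀ - step₂) + step₁ - step₃

lemma of_map {M : Type*} [Field M] {f : M →+* L} {d : M} {y : Fin 3 × ZMod 4 → M}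
    (h : IsCycleLabelling (f d) (f ∘ y)) : IsCycleLabelling d y where
  injective := h.injective.of_comp
  step i j := f.injective (by simpa using h.step i j)
  isTraceTriple := .of_map f.injective (by
    convert h.isTraceTriple using 1
    · simp [map_ofNat]
    · ext i
      simp [cycleTrace])

end IsCycleLabelling

theorem exists_isCycleLabelling_splittingField {K : Type*} [Field K] [NeZero (2 : K)] {c : K}
    (hc : 4 * c + 5 ≠ 0) (hdisc : traceDisc (4 * c + 3) ≠ 0)
    (hnorm : traceNorm (4 * c + 3) ≠ 0) :
    ∃ x, IsCycleLabelling (algebraMap K (Phi4 c).SplittingField c) x := by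
  let L := (Phi4 c).SplittingField
  let f : K →+* AlgebraicClosure L := (algebraMap L _).comp (algebraMap K L)
  have : NeZero (2 : AlgebraicClosure L) := by
    rw [← map_ofNat f 2]
    exact NeZero.of_injective f.injective
  have hm : 4 * f c + 3 = f (4 * c + 3) := by simp [map_ofNat]
  obtain ⟨x, hx⟩ := exists_isCycleLabelling (c := f c)
    (by simpa [map_ofNat] using (_root_.map_ne_zero f).mpr hc)
    (by rwa [hm, ← map_traceDisc, _root_.map_ne_zero])
    (by rwa [hm, ← map_traceNorm, _root_.map_ne_zero])
  have hsplits : (Phi4 (algebraMap K L c)).Splits := by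
    rw [← map_phi4]
    exact SplittingField.splits (Phi4 c)
  have hrange (p : Fin 3 × ZMod 4) : ∃ y, algebraMap L (AlgebraicClosure L) y = x p :=
    hsplits.mem_range_of_isRoot (monic_phi4 _).ne_zero (by
      rw [map_phi4]
      exact hx.isRoot p)
  choose y hy using hrange
  obtain rfl : algebraMap L (AlgebraicClosure L) ∘ y = x := funext hy
  exact ⟨y, .of_map (f := algebraMap L (AlgebraicClosure L)) (d := algebraMap K L c) hx⟩

/-! ### Wreath products with a cyclic group -/

section GroupActions

variable {G ι α : Type*} [Group G] [MulAction G α]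

lemma exists_monoidHom_perm {y : ι → α} (hy : Function.Injective y)
    (h : ∀ (g : G) i, ∃ k, y k = g • y i) :
    ∃ ψ : G →* Equiv.Perm ι, ∀ g i, y (ψ g i) = g • y i := by
  choose φ hφ using h
  let _ : MulAction G ι :=
    { smul := φ
      one_smul := fun i => hy ((hφ 1 i).trans (one_smul G (y i)))
      mul_smul := fun g k i => hy (by
        change y (φ (g * k) i) = y (φ g (φ k i))
        rw [hφ, hφ, hφ, mul_smul]) }
  exact ⟨MulAction.toPermHom G ι, hφ⟩

lemma exists_equivariant_extension {s : G →* Equiv.Perm ι} {i₀ : ι} (hs : ∀ i, ∃ g, s g i₀ = i)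
    {u : α} (hu : ∀ g, s g i₀ = i₀ → g • u = u) :
    ∃ U : ι → α, U i₀ = u ∧ ∀ g i, g • U i = U (s g i) := by
  have hsmul {g k : G} (h : s g i₀ = s k i₀) : g • u = k • u := by
    rw [← inv_smul_eq_iff, smul_smul]
    apply hu
    rw [map_mul, map_inv, Equiv.Perm.mul_apply, h, ← Equiv.Perm.mul_apply, inv_mul_cancel,
      Equiv.Perm.one_apply]
  choose t ht using hs
  refine ⟨fun i => t i • u, ?_, fun g i => ?_⟩
  · exact (hsmul (k := 1) (by rw [ht, map_one, Equiv.Perm.one_apply])).trans (one_smul G u)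
  · rw [smul_smul]
    exact hsmul (by rw [map_mul, Equiv.Perm.mul_apply, ht, ht])

end GroupActions

section SmallPermutationGroups

lemma perm_hom_eq_one_or_eq_sign {ι : Type*} [Fintype ι] [DecidableEq ι]
    (f : Equiv.Perm ι →* ℤˣ) : f = 1 ∨ f = Equiv.Perm.sign := by
  by_cases hf : ∃ u, f u = -1
  · right
    obtain ⟨u, hu⟩ := hf
    refine Equiv.Perm.eq_sign_of_surjective_hom fun z => ?_
    rcases Int.units_eq_one_or z with rfl | rfl
    exacts [⟨1, map_one f⟩, ⟨u, hu⟩]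
  · left
    ext1 u
    exact (Int.units_eq_one_or (f u)).resolve_right fun hu => hf ⟨u, hu⟩

/- An odd permutation `h` of three letters is a transposition; together with any `g` moving its
fixed point it generates everything. -/
lemma perm_fin_three_subgroup_eq_top {H : Subgroup (Equiv.Perm (Fin 3))}
    (hodd : ∃ h ∈ H, Equiv.Perm.sign h = -1) (hmove : ∀ i, ∃ g ∈ H, g i ≠ i) : H = ⊤ := by
  obtain ⟨h, hH, hsign⟩ := hodd
  have hfixed : ∀ h : Equiv.Perm (Fin 3), Equiv.Perm.sign h = -1 → ∃ k, h k = k := by decide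
  obtain ⟨k, hk⟩ := hfixed h hsign
  obtain ⟨g, gH, hgk⟩ := hmove k
  have hwords : ∀ (h g : Equiv.Perm (Fin 3)) (k : Fin 3), Equiv.Perm.sign h = -1 → h k = k →
      g k ≠ k → ∀ u, u = 1 ∨ u = h ∨ u = g ∨ u = h * g ∨ u = g * h ∨ u = h * g * h ∨
        u = g * g := by
    decide
  rw [eq_top_iff]
  rintro u -
  rcases hwords h g k hsign hk hgk u with rfl | rfl | rfl | rfl | rfl | rfl | rfl
  exacts [H.one_mem, hH, gH, H.mul_mem hH gH, H.mul_mem gH hH, H.mul_mem (H.mul_mem hH gH) hH,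
    H.mul_mem gH gH]

lemma perm_fin_three_eq_one_or_eq_swap :
    ∀ u : Equiv.Perm (Fin 3), u 0 = 0 → u = 1 ∨ u = Equiv.swap 1 2 := by
  decide

end SmallPermutationGroups

/-- The permutation of `ι × ZMod n` adding one to the second coordinate. -/
def fiberRotation (ι : Type*) (n : ℕ) : Equiv.Perm (ι × ZMod n) :=
  (Equiv.refl ι).prodCongr (Equiv.addRight 1)

/-- The wreath product of `ZMod n` by the permutation group of `ι`, realized as the group of
permutations of `ι × ZMod n` commuting with `fiberRotation ι n`. -/
def wreath (ι : Type*) (n : ℕ) : Subgroup (Equiv.Perm (ι × ZMod n)) :=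
  Subgroup.centralizer {fiberRotation ι n}

lemma mem_wreath {ι : Type*} {n : ℕ} {w : Equiv.Perm (ι × ZMod n)} :
    w ∈ wreath ι n ↔ ∀ i j, w (i, j + 1) = ((w (i, j)).1, (w (i, j)).2 + 1) := by
  rw [wreath, Subgroup.mem_centralizer_singleton_iff, Equiv.ext_iff, Prod.forall]
  rfl

namespace wreath

variable {ι : Type*} {n : ℕ}

/-- The rotation amount of `w` on the fibre over `i`. -/
def shift (w : wreath ι n) (i : ι) : ZMod n := (w.1 (i, 0)).2

lemma apply_eq_add_shift (w : wreath ι n) (i : ι) (j : ZMod n) :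
    w.1 (i, j) = ((w.1 (i, 0)).1, j + shift w i) := by
  obtain ⟨k, rfl⟩ := ZMod.intCast_surjective j
  induction k using Int.induction_on with
  | zero => simp [shift]
  | succ k ih =>
    rw [Int.cast_add, Int.cast_one, mem_wreath.mp w.2, ih, add_right_comm]
  | pred k ih =>
    have hstep := mem_wreath.mp w.2 i ((-k - 1 : ℤ) : ZMod n)
    have hk : ((-k - 1 : ℤ) : ZMod n) + 1 = (-k : ℤ) := by push_cast; ring
    rw [hk, ih, Prod.mk.injEq] at hstep
    refine Prod.ext hstep.1.symm (add_right_cancel (b := 1) ?_)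
    rw [← hstep.2, ← hk, add_right_comm]

/-- The permutation of the fibres induced by an element of the wreath product. -/
def base : wreath ι n →* Equiv.Perm ι where
  toFun w :=
    { toFun := fun i => (w.1 (i, 0)).1
      invFun := fun i => (w⁻¹.1 (i, 0)).1
      left_inv := fun i => by
        have h := congrArg Prod.fst (apply_eq_add_shift w⁻¹ (w.1 (i, 0)).1 (w.1 (i, 0)).2)
        simpa using h.symm
      right_inv := fun i => by
        have h := congrArg Prod.fst (apply_eq_add_shift w (w⁻¹.1 (i, 0)).1 (w⁻¹.1 (i, 0)).2)
        simpa using h.symm }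
  map_one' := rfl
  map_mul' g k := Equiv.ext fun i =>
    (congrArg Prod.fst (apply_eq_add_shift g (k.1 (i, 0)).1 (k.1 (i, 0)).2) :)

lemma coe_apply (w : wreath ι n) (i : ι) (j : ZMod n) : w.1 (i, j) = (base w i, j + shift w i) :=
  apply_eq_add_shift w i j

lemma shift_one (i : ι) : shift (1 : wreath ι n) i = 0 :=
  rfl

lemma shift_mul (g k : wreath ι n) (i : ι) :
    shift (g * k) i = shift k i + shift g (base k i) :=
  congrArg Prod.snd (coe_apply g (k.1 (i, 0)).1 (k.1 (i, 0)).2)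

lemma ext_base_shift {g k : wreath ι n} (hbase : base g = base k) (hshift : shift g = shift k) :
    g = k := by
  ext1
  refine Equiv.ext fun p => ?_
  rw [coe_apply, coe_apply, hbase, hshift]

/-- The element of the wreath product with prescribed base permutation and shifts. -/
def mk (u : Equiv.Perm ι) (v : ι → ZMod n) : wreath ι n :=
  ⟨u.prodShear fun i => Equiv.addRight (v i), mem_wreath.mpr fun i j =>
    Prod.ext rfl (add_right_comm j 1 (v i))⟩

lemma base_mk (u : Equiv.Perm ι) (v : ι → ZMod n) : base (mk u v) = u :=
  rfl

lemma shift_mk (u : Equiv.Perm ι) (v : ι → ZMod n) : shift (mk u v) = v :=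
  funext fun _ => zero_add _

/-- The shift vectors of the elements of `H` that preserve every fibre. -/
def kernelShifts (H : Subgroup (wreath ι n)) : AddSubmonoid (ι → ZMod n) where
  carrier := {v | ∃ g ∈ H, base g = 1 ∧ shift g = v}
  zero_mem' := ⟨1, H.one_mem, map_one base, funext shift_one⟩
  add_mem' := by
    rintro _ _ ⟨g, gH, hg, rfl⟩ ⟨k, kH, hk, rfl⟩
    refine ⟨k * g, H.mul_mem kH gH, by rw [map_mul, hk, hg, one_mul], funext fun i => ?_⟩
    rw [shift_mul, hg, Equiv.Perm.one_apply, Pi.add_apply]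

lemma comp_mem_kernelShifts {H : Subgroup (wreath ι n)} (hbase : H.map base = ⊤)
    (u : Equiv.Perm ι) {v : ι → ZMod n} (hv : v ∈ kernelShifts H) : v ∘ u ∈ kernelShifts H := by
  obtain ⟨k, kH, hk, rfl⟩ := hv
  obtain ⟨g, gH, rfl⟩ : u ∈ H.map base := hbase ▸ Subgroup.mem_top u
  refine ⟨g⁻¹ * (k * g), H.mul_mem (H.inv_mem gH) (H.mul_mem kH gH), ?_, funext fun i => ?_⟩
  · rw [map_mul, map_mul, map_inv, hk, one_mul, inv_mul_cancel]
  · have hinv := shift_mul g⁻¹ g i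
    rw [inv_mul_cancel, shift_one] at hinv
    rw [shift_mul, shift_mul, map_mul, hk, one_mul, Function.comp_apply]
    linear_combination -hinv

lemma eq_top_of_kernelShifts_eq_top {H : Subgroup (wreath ι n)} (hbase : H.map base = ⊤)
    (hshifts : kernelShifts H = ⊤) : H = ⊤ := by
  rw [eq_top_iff]
  rintro w -
  obtain ⟨g, gH, hg⟩ : base w ∈ H.map base := hbase ▸ Subgroup.mem_top _
  have hquot : base (g⁻¹ * w) = 1 := by rw [map_mul, map_inv, hg, inv_mul_cancel]
  obtain ⟨k, kH, hk, hshift⟩ : shift (g⁻¹ * w) ∈ kernelShifts H :=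
    hshifts ▸ AddSubmonoid.mem_top _
  rw [← mul_inv_cancel_left g w, ← ext_base_shift (hk.trans hquot.symm) hshift]
  exact H.mul_mem gH kH

end wreath

/-- The character of order two of `ZMod 4`. -/
def paritySign (j : ZMod 4) : ℤˣ := (-1) ^ j.val

lemma paritySign_add : ∀ a b : ZMod 4, paritySign (a + b) = paritySign a * paritySign b := by
  decide

lemma exists_eq_mulSingle_of_prod_eq_neg_one : ∀ a b : Fin 3 → ℤˣ, ∏ i, a i = -1 →
    (∃ i k, b i ≠ b k) → ∃ k, a = Pi.mulSingle k (-1) ∨ b = Pi.mulSingle k (-1) ∨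
      a * b = Pi.mulSingle k (-1) := by
  decide

section SignPatterns

variable {ι : Type*} [Finite ι] [DecidableEq ι] {R : AddSubmonoid (ι → ZMod 4)}

lemma mem_addSubmonoid_of_paritySign_eq_one
    (hunit : ∀ l, ∃ t ∈ R, paritySign ∘ t = Pi.mulSingle l (-1))
    {z : ι → ZMod 4} (hz : ∀ i, paritySign (z i) = 1) : z ∈ R := by
  cases nonempty_fintype ι
  have htwo (l : ι) : Pi.single l 2 ∈ R := by
    obtain ⟨t, ht, hl⟩ := hunit l
    convert R.add_mem ht ht using 1
    funext i
    have hdouble : ∀ a : ZMod 4, a + a = if paritySign a = -1 then 2 else 0 := by decide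
    have hi : paritySign (t i) = _ := congrFun hl i
    rw [Pi.add_apply, hdouble, hi, Pi.mulSingle_apply, Pi.single_apply]
    rcases eq_or_ne i l with rfl | h
    · simp
    · simp [h]
  rw [← Finset.univ_sum_single z]
  refine R.sum_mem fun l _ => ?_
  have hcases : ∀ a : ZMod 4, paritySign a = 1 → a = 0 ∨ a = 2 := by decide
  rcases hcases (z l) (hz l) with h | h
  · rw [h, Pi.single_zero]
    exact R.zero_mem
  · rw [h]
    exact htwo l

theorem addSubmonoid_eq_top_of_paritySign_eq_mulSingle
    (hperm : ∀ (u : Equiv.Perm ι), ∀ v ∈ R, v ∘ u ∈ R)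
    {v : ι → ZMod 4} (hv : v ∈ R) {k : ι} (hvk : paritySign ∘ v = Pi.mulSingle k (-1)) :
    R = ⊤ := by
  cases nonempty_fintype ι
  have hunit (l : ι) : ∃ t ∈ R, paritySign ∘ t = Pi.mulSingle l (-1) := by
    refine ⟨v ∘ Equiv.swap k l, hperm _ v hv, ?_⟩
    rw [← Function.comp_assoc, hvk]
    funext i
    simp only [Function.comp_apply, Pi.mulSingle_apply, Equiv.swap_apply_eq_iff,
      Equiv.swap_apply_left]
  have hone (l : ι) : Pi.single l 1 ∈ R := by
    obtain ⟨t, ht, hl⟩ := hunit l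
    rw [← add_sub_cancel t (Pi.single l 1)]
    refine R.add_mem ht (mem_addSubmonoid_of_paritySign_eq_one hunit fun i => ?_)
    have hsub : ∀ a b : ZMod 4, paritySign (a - b) = paritySign a * paritySign b := by decide
    have hi : paritySign (t i) = _ := congrFun hl i
    rw [Pi.sub_apply, hsub, hi, Pi.mulSingle_apply, Pi.single_apply]
    split_ifs <;> rfl
  rw [eq_top_iff]
  rintro z -
  rw [← Finset.univ_sum_single z]
  refine R.sum_mem fun l _ => ?_
  rw [← ZMod.natCast_zmod_val (z l), ← nsmul_one, Pi.single_smul]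
  exact R.nsmul_mem (hone l) _

end SignPatterns

namespace wreath

/-- The product of the parities of all the shifts. -/
def parity {ι : Type*} [Fintype ι] : wreath ι 4 →* ℤˣ where
  toFun w := ∏ i, paritySign (shift w i)
  map_one' := Finset.prod_eq_one fun _ _ => rfl
  map_mul' g k := by
    simp only [shift_mul, paritySign_add, Finset.prod_mul_distrib]
    rw [Equiv.prod_comp (base k) fun i => paritySign (shift g i), mul_comm]

lemma parity_apply {ι : Type*} [Fintype ι] (w : wreath ι 4) :
    parity w = ∏ i, paritySign (shift w i) :=
  rfl

theorem eq_top_of_exists_odd_of_exists_mixed {H : Subgroup (wreath (Fin 3) 4)}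
    (hbase : H.map base = ⊤) (hodd : ∃ g ∈ H, base g = 1 ∧ parity g = -1)
    (hmixed : ∃ g ∈ H, base g = 1 ∧ ∃ i k, paritySign (shift g i) ≠ paritySign (shift g k)) :
    H = ⊤ := by
  obtain ⟨g, gH, hg, hsign⟩ := hodd
  obtain ⟨k, kH, hk, hne⟩ := hmixed
  apply eq_top_of_kernelShifts_eq_top hbase
  have hgR : shift g ∈ kernelShifts H := ⟨g, gH, hg, rfl⟩
  have hkR : shift k ∈ kernelShifts H := ⟨k, kH, hk, rfl⟩
  have hperm := fun u v hv => comp_mem_kernelShifts hbase u (v := v) hv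
  obtain ⟨l, h | h | h⟩ :=
    exists_eq_mulSingle_of_prod_eq_neg_one (paritySign ∘ shift g) (paritySign ∘ shift k) hsign hne
  · exact addSubmonoid_eq_top_of_paritySign_eq_mulSingle hperm hgR h
  · exact addSubmonoid_eq_top_of_paritySign_eq_mulSingle hperm hkR h
  · refine addSubmonoid_eq_top_of_paritySign_eq_mulSingle hperm (add_mem hgR hkR) (k := l) ?_
    rw [← h]
    exact funext fun i => paritySign_add _ _

end wreath

/-! ### The Galois action on a labelling -/

/-- The alternating sum of the points of the `i`-th cycle of a labelling. -/
def cycleDiff {ι L : Type*} [AddCommGroup L] (x : ι × ZMod 4 → L) (i : ι) : L :=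
  ∑ j, paritySign j • x (i, j)

lemma IsCycleLabelling.cycleDiff_sq {L : Type*} [Field L] {c : L} {x : Fin 3 × ZMod 4 → L}
    (h : IsCycleLabelling c x) (i : Fin 3) : cycleDiff x i ^ 2 = cycleTrace x i ^ 2 + 4 := by
  have hdiff : cycleDiff x i = x (i, 0) - x (i, 1) + x (i, 2) - x (i, 3) := by
    rw [cycleDiff, sum_zmod_four, show paritySign 0 = 1 by decide, show paritySign 1 = -1 by decide,
      show paritySign 2 = 1 by decide, show paritySign 3 = -1 by decide, one_smul, one_smul,
      Units.neg_smul, Units.neg_smul, one_smul, one_smul, ← sub_eq_add_neg, ← sub_eq_add_neg]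
  rw [hdiff, cycleTrace, sum_zmod_four]
  linear_combination -4 * h.diagonal i

lemma IsCycleLabelling.prod_cycleDiff_sq {L : Type*} [Field L] {c : L} {x : Fin 3 × ZMod 4 → L}
    (h : IsCycleLabelling c x) : (∏ i, cycleDiff x i) ^ 2 = traceNorm (4 * c + 3) := by
  rw [← h.isTraceTriple.prod_sq_add_four, ← Finset.prod_pow]
  exact Finset.prod_congr rfl fun i _ => h.cycleDiff_sq i

lemma map_intUnits_smul {F M N : Type*} [AddCommGroup M] [AddCommGroup N] [FunLike F M N]
    [AddMonoidHomClass F M N] (f : F) (u : ℤˣ) (a : M) : f (u • a) = u • f a :=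
  map_zsmul f (u : ℤ) a

section FixedElements

variable {K L : Type*} [Field K] [Field L] [Algebra K L] [IsGalois K L] [FiniteDimensional K L]

lemma exists_algebraMap_eq_of_fixed {z : L} (hz : ∀ g : Gal(L/K), g z = z) :
    ∃ y : K, algebraMap K L y = z :=
  (IsGalois.mem_range_algebraMap_iff_fixed z).mpr hz

lemma isSquare_of_fixed {a : K} {z : L} (hz : ∀ g : Gal(L/K), g z = z)
    (hsq : z ^ 2 = algebraMap K L a) : IsSquare a := by
  obtain ⟨y, rfl⟩ := exists_algebraMap_eq_of_fixed hz
  exact ⟨y, (algebraMap K L).injective (by rw [← hsq, map_mul, sq])⟩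

end FixedElements

lemma IsTraceTriple.pairQuartic_isRoot_sum {R : Type*} [CommRing R] [IsDomain R] {m : R}
    {t u : Fin 3 → R} (h : IsTraceTriple m t) (hm : traceNorm m ≠ 0)
    (hu : ∀ i, u i ^ 2 * (t i ^ 2 + 4) = traceNorm m) (hprod : ∏ i, u i = traceNorm m) :
    (pairQuartic m).IsRoot (∑ i, u i) := by
  have hnorm := h.prod_sq_add_four
  rw [Fin.prod_univ_three] at hnorm hprod
  have hsq₀ : u 0 ^ 2 = (t 1 ^ 2 + 4) * (t 2 ^ 2 + 4) :=
    mul_right_cancel₀ (h.sq_add_four_ne_zero hm 0) (by linear_combination hu 0 - hnorm)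
  have hsq₁ : u 1 ^ 2 = (t 0 ^ 2 + 4) * (t 2 ^ 2 + 4) :=
    mul_right_cancel₀ (h.sq_add_four_ne_zero hm 1) (by linear_combination hu 1 - hnorm)
  have hsq₂ : u 2 ^ 2 = (t 0 ^ 2 + 4) * (t 1 ^ 2 + 4) :=
    mul_right_cancel₀ (h.sq_add_four_ne_zero hm 2) (by linear_combination hu 2 - hnorm)
  have hpairs : (u 0 + u 1 + u 2) ^ 2 - (m - 4) * (m - 12) =
      2 * (u 0 * u 1 + u 0 * u 2 + u 1 * u 2) := by
    linear_combination hsq₀ + hsq₁ + hsq₂ + h.sum_mul_sq_add_four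
  have hpairs_sq : (u 0 * u 1 + u 0 * u 2 + u 1 * u 2) ^ 2 =
      traceNorm m * (2 * (u 0 + u 1 + u 2) + (12 - 2 * m)) := by
    rw [← h.sum_sq_add_four]
    linear_combination u 1 ^ 2 * hsq₀ + (t 1 ^ 2 + 4) * (t 2 ^ 2 + 4) * hsq₁ +
      u 2 ^ 2 * hsq₀ + (t 1 ^ 2 + 4) * (t 2 ^ 2 + 4) * hsq₂ +
      u 2 ^ 2 * hsq₁ + (t 0 ^ 2 + 4) * (t 2 ^ 2 + 4) * hsq₂ +
      ((t 0 ^ 2 + 4) + (t 1 ^ 2 + 4) + (t 2 ^ 2 + 4)) * hnorm +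
      2 * (u 0 + u 1 + u 2) * hprod
  rw [pairQuartic_isRoot, Fin.sum_univ_three, hpairs, mul_pow, hpairs_sq]
  ring

/-- A labelling `x` of the points of period four of `x ^ 2 + c` in `L`, together with the action
`φ` of the Galois group on the labels. -/
structure GaloisLabelling {K L : Type*} [Field K] [Field L] [Algebra K L] (c : K)
    (x : Fin 3 × ZMod 4 → L) (φ : Gal(L/K) →* wreath (Fin 3) 4) : Prop
    extends IsCycleLabelling (algebraMap K L c) x where
  map_apply (g : Gal(L/K)) (p : Fin 3 × ZMod 4) : g (x p) = x ((φ g).1 p)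

lemma IsCycleLabelling.exists_galoisLabelling {K L : Type*} [Field K] [Field L] [Algebra K L]
    {c : K} {x : Fin 3 × ZMod 4 → L} (hx : IsCycleLabelling (algebraMap K L c) x) :
    ∃ φ, GaloisLabelling c x φ := by
  have hperm (g : Gal(L/K)) (p : Fin 3 × ZMod 4) : ∃ q, x q = g • x p := by
    rw [← hx.isRoot_iff, AlgEquiv.smul_def]
    have hroot := (hx.isRoot p).map (f := (g : L →+* L))
    rwa [map_phi4, RingHom.coe_coe, AlgEquiv.commutes] at hroot
  obtain ⟨ψ, hψ⟩ := exists_monoidHom_perm hx.injective hperm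
  refine ⟨ψ.codRestrict (wreath (Fin 3) 4) fun g => mem_wreath.mpr fun i j => hx.injective ?_,
    hx, fun g p => (hψ g p).symm⟩
  rw [hψ, hx.step, hx.step, hψ, AlgEquiv.smul_def, AlgEquiv.smul_def, map_add, map_pow,
    AlgEquiv.commutes]

namespace GaloisLabelling

variable {K L : Type*} [Field K] [Field L] [Algebra K L] {c : K} {x : Fin 3 × ZMod 4 → L}
  {φ : Gal(L/K) →* wreath (Fin 3) 4}

open wreath Equiv.Perm

section Action

lemma map_cycleTrace (h : GaloisLabelling c x φ) (g : Gal(L/K)) (i : Fin 3) :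
    g (cycleTrace x i) = cycleTrace x (base (φ g) i) := by
  simp only [cycleTrace, map_sum, h.map_apply, coe_apply]
  exact Equiv.sum_comp (Equiv.addRight (shift (φ g) i)) fun j => x (base (φ g) i, j)

lemma map_cycleDiff (h : GaloisLabelling c x φ) (g : Gal(L/K)) (i : Fin 3) :
    g (cycleDiff x i) = paritySign (shift (φ g) i) • cycleDiff x (base (φ g) i) := by
  rw [cycleDiff, cycleDiff, map_sum, ← Equiv.sum_comp (Equiv.addRight (shift (φ g) i)) fun j =>
      paritySign j • x (base (φ g) i, j), Finset.smul_sum]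
  refine Finset.sum_congr rfl fun j _ => ?_
  rw [map_intUnits_smul, h.map_apply, coe_apply, Equiv.coe_addRight, paritySign_add, smul_smul,
    mul_comm, mul_assoc, Int.units_mul_self, mul_one]

lemma map_prod_cycleDiff (h : GaloisLabelling c x φ) (g : Gal(L/K)) :
    g (∏ i, cycleDiff x i) = parity (φ g) • ∏ i, cycleDiff x i := by
  simp only [map_prod, h.map_cycleDiff, Finset.prod_smul, parity_apply]
  rw [Equiv.prod_comp (base (φ g)) (cycleDiff x)]

lemma map_det_vandermonde (h : GaloisLabelling c x φ) (g : Gal(L/K)) :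
    g (Matrix.vandermonde (cycleTrace x)).det =
      sign (base (φ g)) • (Matrix.vandermonde (cycleTrace x)).det := by
  rw [AlgEquiv.map_det, Units.smul_def, zsmul_eq_mul, ← Matrix.det_permute]
  congr 1
  ext i j
  simp [h.map_cycleTrace]

lemma det_vandermonde_sq (h : GaloisLabelling c x φ) :
    (Matrix.vandermonde (cycleTrace x)).det ^ 2 = algebraMap K L (traceDisc (4 * c + 3)) := by
  rw [h.isTraceTriple.det_vandermonde_sq, map_traceDisc]
  simp [map_ofNat]

lemma prod_cycleDiff_sq (h : GaloisLabelling c x φ) :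
    (∏ i, cycleDiff x i) ^ 2 = algebraMap K L (traceNorm (4 * c + 3)) := by
  rw [h.toIsCycleLabelling.prod_cycleDiff_sq, map_traceNorm]
  simp [map_ofNat]

lemma fixed_of_equivariant {U : Fin 3 → L} (hU : ∀ g i, g (U i) = U (base (φ g) i))
    (g : Gal(L/K)) : g (∑ i, U i) = ∑ i, U i ∧ g (∏ i, U i) = ∏ i, U i := by
  simp only [map_sum, map_prod, hU]
  exact ⟨Equiv.sum_comp (base (φ g)) U, Equiv.prod_comp (base (φ g)) U⟩

/- The hypothesis makes `cycleDiff x 1 * cycleDiff x 2` invariant under the kernel of the base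
action, so the stabilizer of the first cycle acts on it either trivially or by the sign. -/
lemma exists_fixed_pair (h : GaloisLabelling c x φ)
    (hconst : ∀ g, base (φ g) = 1 →
      ∀ i k, paritySign (shift (φ g) i) = paritySign (shift (φ g) k)) :
    ∃ (d : K) (w : L), (d = 1 ∨ d = traceDisc (4 * c + 3)) ∧ w ^ 2 = algebraMap K L d ∧
      ∀ g, base (φ g) 0 = 0 →
        g (cycleDiff x 1 * cycleDiff x 2 * w) = cycleDiff x 1 * cycleDiff x 2 * w := by
  set u := cycleDiff x 1 * cycleDiff x 2 with hu
  have hkernel (g : Gal(L/K)) (hg : base (φ g) = 1) : g u = u := by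
    rw [hu, map_mul, h.map_cycleDiff, h.map_cycleDiff, hg, hconst g hg 1 2, smul_mul_smul_comm,
      Int.units_mul_self, one_smul, one_apply, one_apply]
  by_cases hfix : ∀ g, base (φ g) = Equiv.swap 1 2 → g u = u
  · refine ⟨1, 1, .inl rfl, by simp, fun g hg => ?_⟩
    rw [mul_one]
    exact (perm_fin_three_eq_one_or_eq_swap _ hg).elim (hkernel g) (hfix g)
  push Not at hfix
  obtain ⟨k, hk, hmove⟩ := hfix
  have hneg : k u = -u := by
    have hsmul : k u = (paritySign (shift (φ k) 1) * paritySign (shift (φ k) 2)) • u := by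
      rw [hu, map_mul, h.map_cycleDiff, h.map_cycleDiff, hk, smul_mul_smul_comm,
        Equiv.swap_apply_left, Equiv.swap_apply_right, mul_comm (cycleDiff x 2)]
    rcases Int.units_eq_one_or (paritySign (shift (φ k) 1) * paritySign (shift (φ k) 2))
      with hone | hone
    · exact absurd (by rw [hsmul, hone, one_smul]) hmove
    · rw [hsmul, hone, Units.neg_smul, one_smul]
  refine ⟨_, _, .inr rfl, h.det_vandermonde_sq, fun g hg => ?_⟩
  rw [map_mul, h.map_det_vandermonde]
  rcases perm_fin_three_eq_one_or_eq_swap _ hg with hone | hswap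
  · rw [hkernel g hone, hone, Equiv.Perm.sign_one, one_smul]
  · have hquot : g (k⁻¹ (k u)) = k u := by
      rw [hneg, map_neg, map_neg, ← AlgEquiv.mul_apply, hkernel (g * k⁻¹) (by
        rw [map_mul, map_inv, map_mul, map_inv, hk, hswap, mul_inv_cancel])]
    have hgu : g u = -u := by
      rwa [← AlgEquiv.mul_apply k⁻¹, inv_mul_cancel, AlgEquiv.one_apply, hneg] at hquot
    rw [hgu, hswap, sign_swap (by decide), Units.neg_smul, one_smul, neg_mul_neg]

end Action

section Surjectivity

variable [IsGalois K L] [FiniteDimensional K L]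

lemma base_comp_surjective (h : GaloisLabelling c x φ) (hm : GenericParam (4 * c + 3)) :
    Function.Surjective (base.comp φ) := by
  rw [← MonoidHom.range_eq_top]
  apply perm_fin_three_subgroup_eq_top
  · by_contra! hodd
    refine hm.not_isSquare_traceDisc (isSquare_of_fixed (fun g => ?_) h.det_vandermonde_sq)
    rw [h.map_det_vandermonde,
      (Int.units_eq_one_or _).resolve_right (hodd (base (φ g)) ⟨g, rfl⟩), one_smul]
  · by_contra! hfix
    obtain ⟨i, hi⟩ := hfix
    obtain ⟨t, ht⟩ := exists_algebraMap_eq_of_fixed (K := K) (z := cycleTrace x i) fun g => by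
      rw [h.map_cycleTrace, hi (base (φ g)) ⟨g, rfl⟩]
    have hroot := h.isTraceTriple.isRoot i
    refine hm.not_isRoot_traceCubic t (IsRoot.of_map ?_ (algebraMap K L).injective)
    rw [map_traceCubic, ht]
    simpa [map_ofNat] using hroot

lemma exists_base_eq_one_parity_eq_neg_one (h : GaloisLabelling c x φ)
    (hm : GenericParam (4 * c + 3)) : ∃ g, base (φ g) = 1 ∧ parity (φ g) = -1 := by
  by_contra! hparity
  have hker : (base.comp φ).ker ≤ (parity.comp φ).ker := fun g hg =>
    (Int.units_eq_one_or _).resolve_right (hparity g hg)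
  obtain ⟨χ, hχ⟩ : ∃ χ : Equiv.Perm (Fin 3) →* ℤˣ, ∀ g, χ (base (φ g)) = parity (φ g) :=
    ⟨(base.comp φ).liftOfSurjective (h.base_comp_surjective hm) ⟨parity.comp φ, hker⟩, fun g =>
      (base.comp φ).liftOfRightInverse_comp_apply _ _ ⟨parity.comp φ, hker⟩ g⟩
  rcases perm_hom_eq_one_or_eq_sign χ with rfl | rfl
  · refine hm.not_isSquare_traceNorm (isSquare_of_fixed (fun g => ?_) h.prod_cycleDiff_sq)
    rw [h.map_prod_cycleDiff, ← hχ, MonoidHom.one_apply, one_smul]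
  · refine hm.not_isSquare_traceNorm_mul_traceDisc (isSquare_of_fixed
      (z := (∏ i, cycleDiff x i) * (Matrix.vandermonde (cycleTrace x)).det) (fun g => ?_) ?_)
    · rw [map_mul, h.map_prod_cycleDiff, h.map_det_vandermonde, ← hχ, smul_mul_smul_comm,
        Int.units_mul_self, one_smul]
    · rw [mul_pow, h.prod_cycleDiff_sq, h.det_vandermonde_sq, map_mul]

lemma exists_equivariant_pairs (h : GaloisLabelling c x φ) (hm : GenericParam (4 * c + 3))
    (hconst : ∀ g, base (φ g) = 1 →
      ∀ i k, paritySign (shift (φ g) i) = paritySign (shift (φ g) k)) :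
    ∃ (d : K) (U : Fin 3 → L), (d = 1 ∨ d = traceDisc (4 * c + 3)) ∧
      (∀ g i, g (U i) = U (base (φ g) i)) ∧
      ∀ i, U i ^ 2 * (cycleTrace x i ^ 2 + 4) =
        algebraMap K L (traceNorm (4 * c + 3) * d) := by
  obtain ⟨d, w, hd, hw, hfix⟩ := h.exists_fixed_pair hconst
  have htrans (i : Fin 3) : ∃ g, base.comp φ g 0 = i := by
    obtain ⟨g, hg⟩ := h.base_comp_surjective hm (Equiv.swap 0 i)
    exact ⟨g, by rw [hg, Equiv.swap_apply_left]⟩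
  obtain ⟨U, hU₀, hU⟩ := exists_equivariant_extension htrans hfix
  refine ⟨d, U, hd, hU, fun i => ?_⟩
  obtain ⟨g, rfl⟩ := htrans i
  have hzero : U 0 ^ 2 * (cycleTrace x 0 ^ 2 + 4) =
      algebraMap K L (traceNorm (4 * c + 3) * d) := by
    rw [map_mul, ← h.prod_cycleDiff_sq, ← hw, hU₀, ← h.cycleDiff_sq, Fin.prod_univ_three]
    ring
  have hmap := congrArg g hzero
  rwa [map_mul, map_pow, map_add, map_pow, map_ofNat, h.map_cycleTrace, AlgEquiv.commutes,
    ← AlgEquiv.smul_def g (U 0), hU] at hmap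

/- For `w = ∏ i, U i` in `K` and `N = traceNorm (4 * c + 3)` one has `w ^ 2 = N ^ 2 * d ^ 3`, so `d`
is a square. -/
lemma exists_equivariant_pairs_prod_eq (h : GaloisLabelling c x φ)
    (hm : GenericParam (4 * c + 3)) (hconst : ∀ g, base (φ g) = 1 →
      ∀ i k, paritySign (shift (φ g) i) = paritySign (shift (φ g) k)) :
    ∃ U : Fin 3 → L, (∀ g i, g (U i) = U (base (φ g) i)) ∧
      (∀ i, U i ^ 2 * (cycleTrace x i ^ 2 + 4) = algebraMap K L (traceNorm (4 * c + 3))) ∧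
      ∏ i, U i = algebraMap K L (traceNorm (4 * c + 3)) := by
  obtain ⟨d, U, hd, hU, hsq⟩ := h.exists_equivariant_pairs hm hconst
  obtain ⟨w, hw⟩ := exists_algebraMap_eq_of_fixed fun g => (fixed_of_equivariant hU g).2
  have hN : traceNorm (4 * c + 3) ≠ 0 := fun h0 => hm.not_isSquare_traceNorm (h0 ▸ .zero)
  have hwN : w ^ 2 = traceNorm (4 * c + 3) ^ 2 * d ^ 3 := by
    have hprod : (∏ i, U i) ^ 2 * ∏ i, (cycleTrace x i ^ 2 + 4) =
        algebraMap K L (traceNorm (4 * c + 3) * d) ^ 3 := by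
      rw [← Finset.prod_pow, ← Finset.prod_mul_distrib, Finset.prod_congr rfl fun i _ => hsq i,
        Finset.prod_const, Finset.card_univ, Fintype.card_fin]
    simp only [← h.cycleDiff_sq] at hprod
    rw [Finset.prod_pow, h.prod_cycleDiff_sq, ← hw, ← map_pow, ← map_pow, ← map_mul] at hprod
    apply mul_right_cancel₀ hN
    rw [(algebraMap K L).injective hprod]
    ring
  obtain rfl : d = 1 := by
    refine hd.resolve_right fun hdisc => hm.not_isSquare_traceDisc ?_
    have hd0 : d ≠ 0 := by
      rintro rfl
      exact hm.not_isSquare_traceDisc (hdisc ▸ .zero)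
    refine hdisc ▸ ⟨w / (traceNorm (4 * c + 3) * d), ?_⟩
    field_simp
    linear_combination -hwN
  rw [one_pow, mul_one, sq_eq_sq_iff_eq_or_eq_neg] at hwN
  rw [mul_one] at hsq
  rcases hwN with rfl | rfl
  · exact ⟨U, hU, hsq, hw.symm⟩
  · refine ⟨-U, fun g i => ?_, fun i => ?_, ?_⟩
    · rw [Pi.neg_apply, Pi.neg_apply, map_neg, hU]
    · rw [Pi.neg_apply, neg_sq, hsq]
    · rw [Fin.prod_univ_three] at hw ⊢
      rw [map_neg] at hw
      simp only [Pi.neg_apply]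
      linear_combination hw

lemma exists_base_eq_one_paritySign_ne (h : GaloisLabelling c x φ)
    (hm : GenericParam (4 * c + 3)) : ∃ g, base (φ g) = 1 ∧
      ∃ i k, paritySign (shift (φ g) i) ≠ paritySign (shift (φ g) k) := by
  by_contra! hconst
  obtain ⟨U, hU, hsq, hprod⟩ := h.exists_equivariant_pairs_prod_eq hm hconst
  obtain ⟨y, hy⟩ := exists_algebraMap_eq_of_fixed fun g => (fixed_of_equivariant hU g).1
  have hm' : algebraMap K L (4 * c + 3) = 4 * algebraMap K L c + 3 := by simp [map_ofNat]
  have hN : algebraMap K L (traceNorm (4 * c + 3)) ≠ 0 :=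
    (_root_.map_ne_zero _).mpr fun h0 => hm.not_isSquare_traceNorm (h0 ▸ .zero)
  rw [map_traceNorm, hm'] at hsq hprod hN
  refine hm.not_isRoot_pairQuartic y (IsRoot.of_map ?_ (algebraMap K L).injective)
  rw [map_pairQuartic, hm', hy]
  exact h.isTraceTriple.pairQuartic_isRoot_sum hN hsq hprod

theorem surjective (h : GaloisLabelling c x φ) (hm : GenericParam (4 * c + 3)) :
    Function.Surjective φ := by
  rw [← MonoidHom.range_eq_top]
  apply eq_top_of_exists_odd_of_exists_mixed
  · rw [MonoidHom.map_range, MonoidHom.range_eq_top]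
    exact h.base_comp_surjective hm
  · obtain ⟨g, hg⟩ := h.exists_base_eq_one_parity_eq_neg_one hm
    exact ⟨φ g, ⟨g, rfl⟩, hg⟩
  · obtain ⟨g, hg⟩ := h.exists_base_eq_one_paritySign_ne hm
    exact ⟨φ g, ⟨g, rfl⟩, hg⟩

end Surjectivity

end GaloisLabelling

/-! ### Irreducibility and the Galois group -/

lemma irreducible_of_galois_transitive {K L ι : Type*} [Field K] [Field L] [Algebra K L]
    [Fintype ι] {p : K[X]} (hp : p.Monic) {x : ι → L} (hx : Function.Injective x)
    (hdegree : p.natDegree = Fintype.card ι) {i₀ : ι} (hroot : aeval (x i₀) p = 0)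
    (htrans : ∀ i, ∃ g : Gal(L/K), g (x i₀) = x i) : Irreducible p := by
  classical
  have hint : IsIntegral K (x i₀) := ⟨p, hp, hroot⟩
  have hconj (i : ι) : ((minpoly K (x i₀)).map (algebraMap K L)).IsRoot (x i) := by
    obtain ⟨g, hg⟩ := htrans i
    rw [IsRoot, eval_map_algebraMap, ← hg]
    exact (isConjRoot_of_algEquiv (x i₀) g).aeval_eq_zero
  have hcard : Fintype.card ι ≤ (minpoly K (x i₀)).natDegree := by
    rw [← Finset.card_univ, ← Finset.card_image_of_injective _ hx,
      ← natDegree_map (algebraMap K L)]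
    refine card_le_degree_of_subset_roots fun z hz => ?_
    obtain ⟨i, -, rfl⟩ := Finset.mem_image.mp hz
    exact (mem_roots ((minpoly.monic hint).map _).ne_zero).mpr (hconj i)
  rw [eq_of_monic_of_dvd_of_natDegree_le (minpoly.monic hint) hp (minpoly.dvd K _ hroot)
    (hdegree.trans_le hcard)]
  exact minpoly.irreducible hint

lemma apply_ne_neg_of_sq_eq_sq {F L : Type*} [Field L] [NeZero (2 : L)] [FunLike F L L]
    [RingHomClass F L L] (g : F) {z w : L} (hz : z ≠ 0) (hsq : z ^ 2 = w ^ 2) (hw : g w = w) :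
    g z ≠ -z := by
  have hfix : g z = z := by
    rcases sq_eq_sq_iff_eq_or_eq_neg.mp hsq with rfl | rfl
    · exact hw
    · rw [map_neg, hw]
  intro hneg
  have hdouble : 2 * z = 0 := by linear_combination hneg - hfix
  exact hz ((mul_eq_zero.mp hdouble).resolve_left two_ne_zero)

lemma IsTraceTriple.sq_add_four_mul_sq_add_four {R : Type*} [CommRing R] {t : Fin 3 → R}
    (h : IsTraceTriple (-7) t) :
    (t 1 ^ 2 + 4) * (t 2 ^ 2 + 4) = (3 * t 0 ^ 2 + 2 * t 0 - 13) ^ 2 := by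
  have hmul : t 1 * t 2 = t 0 ^ 2 - 7 := by linear_combination h.sum_mul_eq - t 0 * h.sum_eq
  have hsq : t 1 ^ 2 + t 2 ^ 2 = 14 - t 0 ^ 2 := by
    linear_combination (t 1 + t 2 - t 0) * h.sum_eq - 2 * hmul
  linear_combination (t 1 * t 2 + t 0 ^ 2 - 7) * hmul + 4 * hsq -
    (8 * t 0 + 12) * traceCubic_isRoot.mp (h.isRoot 0)

namespace GaloisLabelling

variable {K L : Type*} [Field K] [Field L] [Algebra K L] {c : K} {x : Fin 3 × ZMod 4 → L}
  {φ : Gal(L/K) →* wreath (Fin 3) 4}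

open wreath

lemma irreducible (h : GaloisLabelling c x φ) (hφ : Function.Surjective φ) :
    Irreducible (Phi4 c) := by
  refine irreducible_of_galois_transitive (i₀ := (0, 0)) (monic_phi4 c) h.injective ?_ ?_ ?_
  · rw [natDegree_phi4, Fintype.card_prod, Fintype.card_fin, ZMod.card]
  · rw [← eval_map_algebraMap, map_phi4]
    exact h.isRoot (0, 0)
  · rintro ⟨i, j⟩
    obtain ⟨g, hg⟩ := hφ (wreath.mk (Equiv.swap 0 i) fun _ => j)
    refine ⟨g, ?_⟩
    rw [h.map_apply, coe_apply, hg, base_mk, shift_mk, Equiv.swap_apply_left, zero_add]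

lemma injective_hom [IsSplittingField K L (Phi4 c)] (h : GaloisLabelling c x φ) :
    Function.Injective φ := by
  refine (injective_iff_map_eq_one φ).mpr fun g hg => AlgEquiv.ext fun z => ?_
  refine DFunLike.congr_fun (f := (g : L →ₐ[K] L)) (g := AlgHom.id K L)
    (AlgHom.ext_of_adjoin_eq_top (IsSplittingField.adjoin_rootSet L (Phi4 c)) ?_) z
  intro y hy
  have hroot : (Phi4 (algebraMap K L c)).IsRoot y := by
    rw [← map_phi4, IsRoot, eval_map_algebraMap]
    exact (mem_rootSet.mp hy).2
  obtain ⟨p, rfl⟩ := h.isRoot_iff.mp hroot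
  exact (h.map_apply g p).trans (by rw [hg]; rfl)

lemma nonempty_mulEquiv_wreath_iff [IsSplittingField K L (Phi4 c)]
    (h : GaloisLabelling c x φ) :
    Nonempty (Gal(L/K) ≃* wreath (Fin 3) 4) ↔ Function.Surjective φ := by
  constructor
  · rintro ⟨e⟩
    exact (h.injective_hom.bijective_of_nat_card_le (Nat.card_congr e.toEquiv).ge).surjective
  · exact fun hφ => ⟨MulEquiv.ofBijective φ ⟨h.injective_hom, hφ⟩⟩

lemma prod_cycleDiff_ne_zero (h : GaloisLabelling c x φ) (hnorm : traceNorm (4 * c + 3) ≠ 0) :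
    ∏ i, cycleDiff x i ≠ 0 := by
  rw [← pow_ne_zero_iff two_ne_zero, h.prod_cycleDiff_sq]
  exact (_root_.map_ne_zero _).mpr hnorm

variable [NeZero (2 : L)]

lemma not_surjective_of_isSquare_traceNorm (h : GaloisLabelling c x φ)
    (hnorm : traceNorm (4 * c + 3) ≠ 0) (hsq : IsSquare (traceNorm (4 * c + 3))) :
    ¬ Function.Surjective φ := by
  intro hφ
  obtain ⟨y, hy⟩ := hsq
  have hodd : parity (wreath.mk 1 ![1, 0, 0]) = -1 := by
    rw [parity_apply, shift_mk]
    decide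
  obtain ⟨g, hg⟩ := hφ (wreath.mk 1 ![1, 0, 0])
  refine apply_ne_neg_of_sq_eq_sq g (h.prod_cycleDiff_ne_zero hnorm) (w := algebraMap K L y)
    ?_ (g.commutes y) ?_
  · rw [h.prod_cycleDiff_sq, hy, map_mul, sq]
  · rw [h.map_prod_cycleDiff, hg, hodd, Units.neg_smul, one_smul]

lemma not_surjective_of_eq_neg_seven (h : GaloisLabelling c x φ)
    (hnorm : traceNorm (4 * c + 3) ≠ 0) (hm : 4 * c + 3 = -7) : ¬ Function.Surjective φ := by
  intro hφ
  have hodd : paritySign ((![0, 1, 0] : Fin 3 → ZMod 4) 1) *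
      paritySign ((![0, 1, 0] : Fin 3 → ZMod 4) 2) = -1 := by
    decide
  obtain ⟨g, hg⟩ := hφ (wreath.mk 1 ![0, 1, 0])
  have hne := Finset.prod_ne_zero_iff.mp (h.prod_cycleDiff_ne_zero hnorm)
  refine apply_ne_neg_of_sq_eq_sq g (mul_ne_zero (hne 1 (Finset.mem_univ 1))
    (hne 2 (Finset.mem_univ 2))) (w := 3 * cycleTrace x 0 ^ 2 + 2 * cycleTrace x 0 - 13) ?_ ?_ ?_
  · have htriple := h.isTraceTriple
    rw [show 4 * algebraMap K L c + 3 = -7 by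
      rw [← map_ofNat (algebraMap K L) 4, ← map_ofNat (algebraMap K L) 3, ← map_mul, ← map_add, hm,
        map_neg, map_ofNat]] at htriple
    rw [mul_pow, h.cycleDiff_sq, h.cycleDiff_sq, htriple.sq_add_four_mul_sq_add_four]
  · have hfix : g (cycleTrace x 0) = cycleTrace x 0 := by
      rw [h.map_cycleTrace, hg, base_mk, Equiv.Perm.one_apply]
    simp only [map_sub, map_add, map_mul, map_pow, map_ofNat, hfix]
  · rw [map_mul, h.map_cycleDiff, h.map_cycleDiff, hg, base_mk, shift_mk, smul_mul_smul_comm,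
      hodd, Units.neg_smul, one_smul, Equiv.Perm.one_apply, Equiv.Perm.one_apply]

end GaloisLabelling

section SplittingField

variable {K : Type*} [Field K] {c : K}

theorem exists_galoisLabelling_splittingField [NeZero (2 : K)]
    (hroot : ∀ t, ¬ (traceCubic (4 * c + 3)).IsRoot t) (hdisc : traceDisc (4 * c + 3) ≠ 0)
    (hnorm : traceNorm (4 * c + 3) ≠ 0) :
    ∃ (x : Fin 3 × ZMod 4 → (Phi4 c).SplittingField)
      (φ : Gal((Phi4 c).SplittingField/K) →* wreath (Fin 3) 4), GaloisLabelling c x φ := by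
  have hc : 4 * c + 5 ≠ 0 := fun h =>
    hroot (-2) (traceCubic_isRoot.mpr (by linear_combination -2 * h))
  obtain ⟨x, hx⟩ := exists_isCycleLabelling_splittingField hc hdisc hnorm
  exact ⟨x, hx.exists_galoisLabelling⟩

theorem GenericParam.irreducible_phi4_and_nonempty_mulEquiv [CharZero K]
    (hm : GenericParam (4 * c + 3)) :
    Irreducible (Phi4 c) ∧ Nonempty ((Phi4 c).Gal ≃* wreath (Fin 3) 4) := by
  obtain ⟨x, φ, h⟩ := exists_galoisLabelling_splittingField hm.not_isRoot_traceCubic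
    (fun h0 => hm.not_isSquare_traceDisc (h0 ▸ .zero))
    (fun h0 => hm.not_isSquare_traceNorm (h0 ▸ .zero))
  have : IsGalois K (Phi4 c).SplittingField := ⟨⟩
  have hφ := h.surjective hm
  exact ⟨h.irreducible hφ, h.nonempty_mulEquiv_wreath_iff.mpr hφ⟩

theorem not_nonempty_gal_mulEquiv_wreath [NeZero (2 : K)]
    (hroot : ∀ t, ¬ (traceCubic (4 * c + 3)).IsRoot t) (hdisc : traceDisc (4 * c + 3) ≠ 0)
    (hnorm : traceNorm (4 * c + 3) ≠ 0)
    (hsmall : IsSquare (traceNorm (4 * c + 3)) ∨ 4 * c + 3 = -7) :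
    ¬ Nonempty ((Phi4 c).Gal ≃* wreath (Fin 3) 4) := by
  obtain ⟨x, φ, h⟩ := exists_galoisLabelling_splittingField hroot hdisc hnorm
  have : NeZero (2 : (Phi4 c).SplittingField) := by
    exact NeZero.nat_of_injective (algebraMap K (Phi4 c).SplittingField).injective
  refine h.nonempty_mulEquiv_wreath_iff.not.mpr ?_
  rcases hsmall with hsq | hm
  · exact h.not_surjective_of_isSquare_traceNorm hnorm hsq
  · exact h.not_surjective_of_eq_neg_seven hnorm hm

end SplittingField

section CycleQuartic

variable {K : Type*} [Field K] [CharZero K]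

/-- The quartic polynomial whose roots are the points of the 4-cycle of `x ^ 2 + c` with trace
`t`. -/
noncomputable def cycleQuartic (c t : K) : K[X] :=
  X ^ 4 - C t * X ^ 3 + C ((t ^ 2 - t) / 2 + 2 * c) * X ^ 2 +
    C ((t ^ 2 + t + 2) / 2 - c * t) * X + C (c * t + 1 + c * (t ^ 2 + 2 - t) / 2 + c ^ 2)

lemma natDegree_cycleQuartic (c t : K) : (cycleQuartic c t).natDegree = 4 := by
  rw [cycleQuartic]
  compute_degree!

/- `cycleQuartic c t` is `P + t * Q + t ^ 2 * R`, and the cofactor is the product of its conjugates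
at the two other roots of the trace cubic, whose sum is `-t` and whose product is
`4 * c + 3 + t ^ 2`. -/
theorem cycleQuartic_dvd_phi4 {c t : K} (ht : (traceCubic (4 * c + 3)).IsRoot t) :
    cycleQuartic c t ∣ Phi4 c := by
  rw [traceCubic_isRoot] at ht
  have ht0 : t ≠ 0 := by
    rintro rfl
    norm_num at ht
  obtain rfl : c = -(t ^ 3 + 3 * t + 4) / (4 * t) := by
    field_simp
    linear_combination ht
  set c := -(t ^ 3 + 3 * t + 4) / (4 * t) with hc
  let P : K[X] := X ^ 4 + C (2 * c) * X ^ 2 + X + C (1 + c + c ^ 2)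
  let Q : K[X] := -X ^ 3 - C (1 / 2) * X ^ 2 + C (1 / 2 - c) * X + C (c / 2)
  let R : K[X] := C (1 / 2) * (X ^ 2 + X + C c)
  let s := 4 * c + 3 + t ^ 2
  refine ⟨P ^ 2 - C t * P * Q + C (t ^ 2 - 2 * s) * P * R + C s * Q ^ 2 - C (t * s) * Q * R +
    C (s ^ 2) * R ^ 2, Polynomial.funext fun z => ?_⟩
  simp only [Phi4, cycleQuartic, P, Q, R, s, eval_add, eval_mul, eval_sub, eval_neg, eval_pow,
    eval_X, eval_C]
  rw [hc]
  field_simp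
  ring

theorem not_irreducible_phi4 {c t : K} (ht : (traceCubic (4 * c + 3)).IsRoot t) :
    ¬ Irreducible (Phi4 c) := by
  intro hirr
  rcases hirr.dvd_iff.mp (cycleQuartic_dvd_phi4 ht) with hunit | hassoc
  · have hdegree := natDegree_eq_zero_of_isUnit hunit
    rw [natDegree_cycleQuartic] at hdegree
    omega
  · have hdegree := natDegree_eq_of_degree_eq (degree_eq_degree_of_associated hassoc)
    rw [natDegree_cycleQuartic, natDegree_phi4] at hdegree
    omega

end CycleQuartic

lemma traceNorm_pos {R : Type*} [CommRing R] [LinearOrder R] [IsStrictOrderedRing R] (m : R) :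
    0 < traceNorm m := by
  rw [traceNorm]
  nlinarith [sq_nonneg (m - 4)]

/-- The exceptional set of `Φ₄(t, x)`: for every rational `c`, either `Φ₄(c, x)` is
reducible or its Galois group is not isomorphic to the Galois group of `Φ₄(t, x)`
over `ℚ(t)`, if and only if `c ∈ Im λ ∪ Im η ∪ {-5/2}`. -/
theorem phi4_exceptional_set (c : ℚ) :
    (¬ Irreducible (Phi4 c) ∨
      ¬ Nonempty ((Phi4 c).Gal ≃* (Phi4 (RatFunc.X : RatFunc ℚ)).Gal)) ↔
    ((∃ r : ℚ, r ≠ 0 ∧ c = (r ^ 2 + 2 * r - 4) / (8 * r)) ∨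
     (∃ r : ℚ, r ≠ 0 ∧ c = (4 - 3 * r - r ^ 3) / (4 * r)) ∨
     c = -5/2) := by
  obtain ⟨-, ⟨generic⟩⟩ := genericParam_ratFunc_X.irreducible_phi4_and_nonempty_mulEquiv
  constructor
  · contrapose!
    rintro ⟨hlambda, heta, hc⟩
    obtain ⟨hirr, ⟨e⟩⟩ := (genericParam_of_not_exceptional (by push Not; exact hlambda)
      (by push Not; exact heta) hc).irreducible_phi4_and_nonempty_mulEquiv
    exact ⟨hirr, ⟨e.trans generic.symm⟩⟩
  · rw [exists_eq_lambda_iff, exists_eq_eta_iff]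
    intro hexceptional
    by_cases heta : ∃ t, (traceCubic (4 * c + 3)).IsRoot t
    · exact .inl (not_irreducible_phi4 heta.choose_spec)
    · have hdisc : traceDisc (4 * c + 3) ≠ 0 := fun h =>
        not_isSquare_traceDisc (4 * c + 3) (h ▸ .zero)
      refine .inr fun ⟨e⟩ => not_nonempty_gal_mulEquiv_wreath (not_exists.mp heta) hdisc
        (traceNorm_pos _).ne' ?_ ⟨e.trans generic⟩
      rcases hexceptional with hsquare | hroot | rfl
      · exact .inl hsquare
      · exact absurd hroot heta
      · exact .inr (by norm_num)
end

section
/- The set of pairs (t,x) ∈ ℚ × ℚ satisfying x² − 64t² + 32t − 20 = 0 is exactly the set {(λ(z), (z² + 4)/z) : z ∈ ℚ, z ≠ 0}, where λ(z) = (z² + 2z − 4)/(8z). -/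
/-! Completing the square turns the curve into the hyperbola `x² − (8t − 2)² = 16`. The left side
factors, so `z = (x + (8t − 2)) / 2` and `w = (x − (8t − 2)) / 2` satisfy `wz = 4`; a point is thus
given by a nonzero `z` together with `w = 4 / z`, and `x = z + w`, `8t − 2 = z − w`. -/

section

variable {K : Type*} [Field K] [NeZero (2 : K)]

theorem sq_sub_sq_eq_four_mul_iff {c : K} (hc : c ≠ 0) (x y : K) :
    x ^ 2 - y ^ 2 = 4 * c ↔ ∃ z : K, z ≠ 0 ∧ y = z - c / z ∧ x = z + c / z := by
  have h2 : (2 : K) ≠ 0 := two_ne_zero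
  constructor
  · intro h
    have hprod : (x - y) / 2 * ((x + y) / 2) = c := by
      field_simp
      linear_combination h
    have hz : (x + y) / 2 ≠ 0 := right_ne_zero_of_mul (hprod ▸ hc)
    have hw : (x - y) / 2 = c / ((x + y) / 2) := eq_div_of_mul_eq hz hprod
    refine ⟨(x + y) / 2, hz, ?_, ?_⟩ <;> rw [← hw] <;> field_simp <;> ring
  · rintro ⟨z, hz, rfl, rfl⟩
    field_simp
    ring

theorem curve_C1_points_general (t x : K) :
    x ^ 2 - 64 * t ^ 2 + 32 * t - 20 = 0 ↔
    ∃ z : K, z ≠ 0 ∧ t = (z ^ 2 + 2 * z - 4) / (8 * z) ∧ x = (z ^ 2 + 4) / z := by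
  have h4 : (4 : K) ≠ 0 := (by norm_num : (2 : K) ^ 2 = 4) ▸ pow_ne_zero 2 two_ne_zero
  have h8 : (8 : K) ≠ 0 := (by norm_num : (2 : K) ^ 3 = 8) ▸ pow_ne_zero 3 two_ne_zero
  have hsquare : x ^ 2 - 64 * t ^ 2 + 32 * t - 20 = 0 ↔ x ^ 2 - (8 * t - 2) ^ 2 = 4 * 4 := by
    constructor <;> intro h <;> linear_combination h
  rw [hsquare, sq_sub_sq_eq_four_mul_iff h4]
  refine exists_congr fun z => and_congr_right fun hz => and_congr ?_ ?_
  · rw [eq_div_iff (mul_ne_zero h8 hz)]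
    field_simp
    constructor <;> intro h <;> linear_combination h
  · rw [add_div, sq, mul_self_div_self]

end

/-- The rational points of the curve `x² − 64t² + 32t − 20 = 0` are exactly the
points `(λ(z), (z² + 4)/z)` for nonzero rational `z`, where
`λ(z) = (z² + 2z − 4)/(8z)`. -/
theorem curve_C1_points (t x : ℚ) :
    x ^ 2 - 64 * t ^ 2 + 32 * t - 20 = 0 ↔
    ∃ z : ℚ, z ≠ 0 ∧ t = (z ^ 2 + 2 * z - 4) / (8 * z) ∧ x = (z ^ 2 + 4) / z :=
  curve_C1_points_general t x
end

section
/- The set of pairs (t,x) ∈ ℚ × ℚ satisfying x⁴ + (12 − 16t)x³ + (64t² − 64t + 36)x² + (256t² − 64t + 160)x + 256t² = 0 is exactly {(0, 0), (0, −10), (−5/2, −10)}. -/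
/-!
Completing the square in `t` turns the curve into the elliptic curve
`w ^ 2 = z * (z ^ 2 - 2 * z + 5)` with `z = -x / 2`, so everything rests on showing that the five
affine torsion points are the only affine rational points of the latter. Clearing denominators, with
the help of the translation `z ↦ 5 / z` by `(0, 0)`, reduces this to the quartic
`a ^ 4 - 2 * a ^ 2 * b ^ 2 + 5 * b ^ 4 = c ^ 2`.

For odd `c` the quartic has only solutions with `b = 0`, by Fermat descent along a pair of dual
2-isogenies: factoring `4 * b ^ 4 = c ^ 2 - (a ^ 2 - b ^ 2) ^ 2` gives a solution of
`r ^ 4 + r ^ 2 * s ^ 2 - s ^ 4 = a ^ 2`, and completing the square in `r ^ 2` and factoring again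
gives a solution of the quartic with smaller `b`. When `a` and `b` are both odd, translating the
point `z = (a / b) ^ 2` by a 3-torsion point leads back to a solution with odd `c`.
-/

theorem isRelPrime_of_mul_eq_squarefree_mul {R : Type*} [CommRing R] {d w x y : R}
    (hd : Squarefree d) (hw : IsCoprime (x - y) w) (h : x * y = d * w) : IsRelPrime x y := by
  intro g hgx hgy
  have hgw : IsCoprime g w := hw.of_isCoprime_of_dvd_left (dvd_sub hgx hgy)
  exact hd g ((hgw.mul_left hgw).dvd_of_dvd_mul_right (h ▸ mul_dvd_mul hgx hgy))

theorem exists_isCoprime_eq_pow_of_mul_eq_pow {n : ℕ} (hn : n ≠ 0) {x y z : ℤ} (hx : 0 ≤ x)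
    (hy : 0 ≤ y) (hxy : IsCoprime x y) (h : x * y = z ^ n) :
    ∃ u v : ℤ, IsCoprime u v ∧ u * v = |z| ∧ x = u ^ n ∧ y = v ^ n := by
  lift x to ℕ using hx
  lift y to ℕ using hy
  have hgcd : IsUnit (gcd x y) := Nat.isUnit_iff.2 (Nat.isCoprime_iff_coprime.1 hxy)
  have hnat : x * y = z.natAbs ^ n := by
    rw [← Int.natAbs_pow, ← h, ← Nat.cast_mul, Int.natAbs_natCast]
  obtain ⟨u, rfl⟩ := exists_eq_pow_of_mul_eq_pow hgcd hnat
  obtain ⟨v, rfl⟩ :=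
    exists_eq_pow_of_mul_eq_pow (gcd_comm (u ^ n) y ▸ hgcd) ((mul_comm _ _).trans hnat)
  have huv : u * v = z.natAbs := Nat.pow_left_injective hn (by simpa only [mul_pow] using hnat)
  rw [Nat.cast_pow, Nat.cast_pow] at hxy
  exact ⟨u, v, (IsCoprime.pow_iff hn.bot_lt hn.bot_lt).1 hxy,
    by rw [← Nat.cast_mul, huv, Int.natCast_natAbs], Nat.cast_pow u n, Nat.cast_pow v n⟩

theorem exists_isCoprime_add_of_mul_eq_prime_mul_pow {n : ℕ} (hn : n ≠ 0) {p x y z : ℤ}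
    (hp : Prime p) (hp0 : 0 < p) (hx : 0 ≤ x) (hy : 0 ≤ y) (hxy : IsCoprime x y)
    (h : x * y = p * z ^ n) :
    ∃ u v : ℤ, IsCoprime u v ∧ u * v = |z| ∧ x + y = u ^ n + p * v ^ n := by
  wlog hpy : p ∣ y generalizing x y
  · have hpx : p ∣ x := (hp.dvd_or_dvd ⟨_, h⟩).resolve_right hpy
    simpa only [add_comm y x] using this hy hx hxy.symm ((mul_comm y x).trans h) hpx
  obtain ⟨y, rfl⟩ := hpy
  have hxyz : x * y = z ^ n := mul_left_cancel₀ hp0.ne' (by linear_combination h)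
  obtain ⟨u, v, huv, huvz, rfl, rfl⟩ := exists_isCoprime_eq_pow_of_mul_eq_pow hn hx
    (nonneg_of_mul_nonneg_right hy hp0) hxy.of_mul_right_right hxyz
  exact ⟨u, v, huv, huvz, rfl⟩

section SqAddFourMulPowFour

variable {d x w c : ℤ}

theorem odd_iff_odd_of_sq_add_four_mul_pow_four (h : x ^ 2 + 4 * d * w ^ 4 = c ^ 2) :
    Odd c ↔ Odd x := by
  have heven : Even (4 * d * w ^ 4) := ⟨2 * d * w ^ 4, by ring⟩
  rw [← Int.odd_pow' two_ne_zero, ← h, Int.odd_add, iff_true_right heven, Int.odd_pow' two_ne_zero]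

theorem even_of_odd_sq_add_four_mul_pow_four (hd : Odd d) (hx : Odd x)
    (h : x ^ 2 + 4 * d * w ^ 4 = c ^ 2) : Even w := by
  by_contra hw
  rw [Int.not_even_iff_odd] at hw
  have hc : Odd c := (odd_iff_odd_of_sq_add_four_mul_pow_four h).2 hx
  have hx8 := Int.eight_dvd_sq_sub_one_of_odd hx
  have hc8 := Int.eight_dvd_sq_sub_one_of_odd hc
  obtain ⟨k, hk⟩ := hd.mul (hw.pow (n := 4))
  have hk4 : x ^ 2 + 4 * (2 * k + 1) = c ^ 2 := by rw [← hk, ← h]; ring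
  omega

theorem exists_isCoprime_factors_of_sq_add_four_mul_pow_four (hd : Squarefree d) (hd0 : 0 ≤ d)
    (hx : Odd x) (hxw : IsCoprime x w) (h : x ^ 2 + 4 * d * w ^ 4 = c ^ 2) :
    ∃ y z : ℤ, 0 ≤ y ∧ 0 ≤ z ∧ IsCoprime y z ∧ y * z = d * w ^ 4 ∧ y - z = x ∧ y + z = |c| := by
  have hc : Odd |c| := odd_abs.2 ((odd_iff_odd_of_sq_add_four_mul_pow_four h).2 hx)
  obtain ⟨z, hz⟩ := (hc.sub_odd hx).two_dvd
  have hsum : (z + x) + z = |c| := by linear_combination -hz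
  have hmul : (z + x) * z = d * w ^ 4 := by
    have hfour : 4 * ((z + x) * z) = 4 * (d * w ^ 4) := by
      linear_combination (2 * z + x + |c|) * hsum + sq_abs c - h
    exact mul_left_cancel₀ four_ne_zero hfour
  have hnonneg : 0 ≤ z + x ∧ 0 ≤ z := by
    have hmul0 : 0 ≤ (z + x) * z := hmul ▸ mul_nonneg hd0 (by positivity)
    have hsum0 : 0 ≤ (z + x) + z := hsum ▸ abs_nonneg c
    rcases mul_nonneg_iff.1 hmul0 with hpos | hneg <;> omega
  have hcop : IsCoprime (z + x) z := by
    refine (isRelPrime_of_mul_eq_squarefree_mul hd ?_ hmul).isCoprime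
    simpa only [add_sub_cancel_left] using hxw.pow_right
  exact ⟨z + x, z, hnonneg.1, hnonneg.2, hcop, hmul, add_sub_cancel_left z x, hsum⟩

theorem exists_isCoprime_pow_four_sub_pow_four (hx : Odd x) (hxw : IsCoprime x w)
    (h : x ^ 2 + 4 * w ^ 4 = c ^ 2) :
    ∃ r s : ℤ, IsCoprime r s ∧ r * s = |w| ∧ r ^ 4 - s ^ 4 = x := by
  obtain ⟨y, z, hy, hz, hyz, hmul, hsub, -⟩ :=
    exists_isCoprime_factors_of_sq_add_four_mul_pow_four squarefree_one zero_le_one hx hxw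
      (by rwa [mul_one])
  obtain ⟨r, s, hrs, hrsw, rfl, rfl⟩ :=
    exists_isCoprime_eq_pow_of_mul_eq_pow four_ne_zero hy hz hyz (hmul.trans (one_mul _))
  exact ⟨r, s, hrs, hrsw, hsub⟩

theorem exists_isCoprime_pow_four_add_prime_mul_pow_four {p : ℤ} (hp : Prime p) (hp0 : 0 < p)
    (hx : Odd x) (hxw : IsCoprime x w) (h : x ^ 2 + 4 * p * w ^ 4 = c ^ 2) :
    ∃ u v : ℤ, IsCoprime u v ∧ u * v = |w| ∧ u ^ 4 + p * v ^ 4 = |c| := by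
  obtain ⟨y, z, hy, hz, hyz, hmul, -, hadd⟩ :=
    exists_isCoprime_factors_of_sq_add_four_mul_pow_four hp.squarefree hp0.le hx hxw h
  obtain ⟨u, v, huv, huvw, hsum⟩ :=
    exists_isCoprime_add_of_mul_eq_prime_mul_pow four_ne_zero hp hp0 hy hz hyz hmul
  exact ⟨u, v, huv, huvw, hsum.symm.trans hadd⟩

end SqAddFourMulPowFour

theorem pow_four_emod_four_eq_one_of_odd {x : ℤ} (hx : Odd x) : x ^ 4 % 4 = 1 := by
  rw [pow_mul x 2 2]
  exact Int.sq_mod_four_eq_one_of_odd hx.pow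

theorem even_of_pow_four_sub_pow_four_eq {a b r s : ℤ} (ha : Odd a) (hb : Even b)
    (h : r ^ 4 - s ^ 4 = a ^ 2 - b ^ 2) : Even s := by
  by_contra hs
  have hs4 := pow_four_emod_four_eq_one_of_odd (Int.not_even_iff_odd.1 hs)
  have ha4 := Int.sq_mod_four_eq_one_of_odd ha
  obtain ⟨k, rfl⟩ := hb.two_dvd
  have hr4 : r ^ 4 % 4 = 2 := by
    rw [mul_pow] at h
    omega
  rcases Int.even_or_odd r with hr | hr
  · obtain ⟨l, rfl⟩ := hr.two_dvd
    rw [mul_pow] at hr4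
    omega
  · have hr4' := pow_four_emod_four_eq_one_of_odd hr
    omega

section Quartic

variable {a b c : ℤ}

theorem odd_and_even_of_quartic (hc : Odd c)
    (h : a ^ 4 - 2 * a ^ 2 * b ^ 2 + 5 * b ^ 4 = c ^ 2) : Odd a ∧ Even b := by
  have hsq : (a ^ 2 - b ^ 2) ^ 2 + 4 * 1 * b ^ 4 = c ^ 2 := by linear_combination h
  have hsub : Odd (a ^ 2 - b ^ 2) := (odd_iff_odd_of_sq_add_four_mul_pow_four hsq).1 hc
  have hb : Even b := even_of_odd_sq_add_four_mul_pow_four odd_one hsub hsq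
  rw [Int.odd_sub, iff_true_right (hb.pow_of_ne_zero two_ne_zero), Int.odd_pow' two_ne_zero] at hsub
  exact ⟨hsub, hb⟩

theorem exists_isCoprime_quartic_descent (hab : IsCoprime a b) (hc : Odd c)
    (h : a ^ 4 - 2 * a ^ 2 * b ^ 2 + 5 * b ^ 4 = c ^ 2) :
    ∃ u v r : ℤ, IsCoprime u v ∧ Odd r ∧ 2 * v ∣ b ∧
      u ^ 4 - 2 * u ^ 2 * v ^ 2 + 5 * v ^ 4 = r ^ 2 := by
  obtain ⟨ha, hb⟩ := odd_and_even_of_quartic hc h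
  have hsub : Odd (a ^ 2 - b ^ 2) := ha.pow.sub_even (hb.pow_of_ne_zero two_ne_zero)
  have hcop : IsCoprime (a ^ 2 - b ^ 2) b := by
    rw [show a ^ 2 - b ^ 2 = a ^ 2 + b * -b by ring]
    exact hab.pow_left.add_mul_left_left (-b)
  obtain ⟨r, s, hrs, hrsb, hsub4⟩ :=
    exists_isCoprime_pow_four_sub_pow_four (c := c) hsub hcop (by linear_combination h)
  obtain ⟨w, rfl⟩ := (even_of_pow_four_sub_pow_four_eq ha hb hsub4).two_dvd
  have hr : Odd r := Int.isCoprime_two_right.1 hrs.of_mul_right_left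
  have hb2 : b ^ 2 = (r * (2 * w)) ^ 2 := by rw [hrsb, sq_abs]
  have hwb : 2 * w ∣ b := (dvd_abs _ _).1 ⟨r, by rw [← hrsb, mul_comm]⟩
  have haw : IsCoprime a w := hab.of_isCoprime_of_dvd_right ((dvd_mul_left w 2).trans hwb)
  have ha2 : a ^ 2 + 4 * 5 * w ^ 4 = (r ^ 2 + 2 * w ^ 2) ^ 2 := by
    linear_combination hb2 - hsub4
  obtain ⟨u, v, huv, huvw, hsum⟩ := exists_isCoprime_pow_four_add_prime_mul_pow_four
    (by norm_num) (by norm_num) ha haw ha2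
  rw [abs_of_nonneg (by positivity)] at hsum
  have huvw2 : (u * v) ^ 2 = w ^ 2 := by rw [huvw, sq_abs]
  have hvw : v ∣ w := (dvd_abs _ _).1 (Dvd.intro_left u huvw)
  exact ⟨u, v, r, huv, hr, (mul_dvd_mul_left 2 hvw).trans hwb,
    by linear_combination hsum - 2 * huvw2⟩

theorem eq_zero_of_isCoprime_of_quartic (hab : IsCoprime a b) (hc : Odd c)
    (h : a ^ 4 - 2 * a ^ 2 * b ^ 2 + 5 * b ^ 4 = c ^ 2) : b = 0 := by
  induction hn : b.natAbs using Nat.strong_induction_on generalizing a b c with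
  | _ n ih =>
    subst hn
    by_contra hb0
    obtain ⟨u, v, r, huv, hr, hvb, hquartic⟩ := exists_isCoprime_quartic_descent hab hc h
    have hv0 : v ≠ 0 := by
      rintro rfl
      exact hb0 (zero_dvd_iff.1 hvb)
    have hlt : v.natAbs < b.natAbs := by
      have hle := Int.natAbs_le_of_dvd_ne_zero hvb hb0
      omega
    exact hv0 (ih v.natAbs hlt huv hr hquartic rfl)

theorem eq_zero_of_quartic (hc : Odd c)
    (h : a ^ 4 - 2 * a ^ 2 * b ^ 2 + 5 * b ^ 4 = c ^ 2) : b = 0 := by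
  have ha0 : a ≠ 0 := by
    rintro rfl
    simpa using (odd_and_even_of_quartic hc h).1
  obtain ⟨g, a, b, hg0, hab, rfl, rfl⟩ := Int.exists_gcd_one' (Int.gcd_pos_of_ne_zero_left b ha0)
  have hg : (g : ℤ) ≠ 0 := mod_cast hg0.ne'
  have hsq : (g ^ 2 : ℤ) ^ 2 * (a ^ 4 - 2 * a ^ 2 * b ^ 2 + 5 * b ^ 4) = c ^ 2 := by
    linear_combination h
  obtain ⟨c, rfl⟩ : (g ^ 2 : ℤ) ∣ c := (Int.pow_dvd_pow_iff two_ne_zero).1 ⟨_, hsq.symm⟩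
  have hb : b = 0 := eq_zero_of_isCoprime_of_quartic (Int.isCoprime_iff_gcd_eq_one.2 hab)
    (Int.Odd.of_mul_right hc)
    (mul_left_cancel₀ (pow_ne_zero 2 (pow_ne_zero 2 hg)) (hsq.trans (mul_pow _ c 2)))
  rw [hb, zero_mul]

theorem mul_eq_zero_of_odd_of_quadratic {s t e : ℤ} (hst : Odd (s + t)) (he : Odd e)
    (h : e ^ 2 - e * (t ^ 2 - s ^ 2) + s * t * (t ^ 2 - 3 * s * t + s ^ 2) = 0) : s * t = 0 := by
  have hmul : Even (s * t) := by grind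
  have hsq : Odd (s ^ 2 + t ^ 2) := by
    simpa only [Int.odd_add, Int.odd_pow' two_ne_zero, Int.even_pow' two_ne_zero] using hst
  have hc : Odd (e * (s ^ 2 + t ^ 2) - s * t * (t ^ 2 - s ^ 2)) :=
    (he.mul hsq).sub_even (hmul.mul_right _)
  refine eq_zero_of_quartic hc (a := e) ?_
  linear_combination
    (e ^ 2 + e * (t ^ 2 - s ^ 2) - s * t * (s ^ 2 + t ^ 2) - 3 * (s * t) ^ 2) * h

theorem sq_eq_sq_of_odd_of_quartic (ha : Odd a) (hb : Odd b)
    (h : a ^ 4 - 2 * a ^ 2 * b ^ 2 + 5 * b ^ 4 = c ^ 2) : a ^ 2 = b ^ 2 := by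
  obtain ⟨s, hs⟩ := (ha.sub_odd hb).two_dvd
  obtain ⟨t, rfl⟩ : ∃ t, b = t - s := ⟨b + s, by ring⟩
  obtain rfl : a = t + s := by linear_combination hs
  have hc : Even c := by
    have hc2 : Even (c ^ 2) := ⟨2 * (2 * s * t) ^ 2 + 2 * (t - s) ^ 4, by linear_combination -h⟩
    exact (Int.even_pow' two_ne_zero).1 hc2
  obtain ⟨d, rfl⟩ := hc.two_dvd
  have hd : d ^ 2 = (2 * s * t) ^ 2 + (t - s) ^ 4 := by linarith
  have hd_odd : Odd d := by
    have hd2 : Odd (d ^ 2) := hd ▸ Even.add_odd ⟨2 * (s * t) ^ 2, by ring⟩ hb.pow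
    exact (Int.odd_pow' two_ne_zero).1 hd2
  have hab : Odd (t ^ 2 - s ^ 2) := by
    convert ha.mul hb using 1
    ring
  -- `(e / (s * t)) ^ 2` is the `z`-coordinate of a translate of `z = (a / b) ^ 2` by `(1, ±2)`; the
  -- two signs give the two roots `e` of `hquad`, exactly one of which is odd.
  obtain ⟨e, he⟩ := (hd_odd.add_odd hab).two_dvd
  obtain rfl : d = 2 * e - (t ^ 2 - s ^ 2) := by linear_combination he
  have hquad : e ^ 2 - e * (t ^ 2 - s ^ 2) + s * t * (t ^ 2 - 3 * s * t + s ^ 2) = 0 := by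
    linarith
  have hst : s * t = 0 := by
    rcases Int.even_or_odd e with he_even | he_odd
    · refine mul_eq_zero_of_odd_of_quadratic (add_comm t s ▸ ha) (hab.sub_even he_even) ?_
      linear_combination hquad
    · exact mul_eq_zero_of_odd_of_quadratic (add_comm t s ▸ ha) he_odd hquad
  linear_combination 4 * hst

theorem eq_zero_or_sq_eq_sq_of_quartic (hab : IsCoprime a b)
    (h : a ^ 4 - 2 * a ^ 2 * b ^ 2 + 5 * b ^ 4 = c ^ 2) : b = 0 ∨ a ^ 2 = b ^ 2 := by
  rcases Int.even_or_odd c with hc | hc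
  · right
    have hsub : ¬Odd (a ^ 2 - b ^ 2) := by
      have hsq : (a ^ 2 - b ^ 2) ^ 2 + 4 * 1 * b ^ 4 = c ^ 2 := by linear_combination h
      rwa [← odd_iff_odd_of_sq_add_four_mul_pow_four hsq, Int.not_odd_iff_even]
    have hparity : Even a ↔ Even b := by
      simpa only [Int.not_odd_iff_even, Int.even_sub, Int.even_pow' two_ne_zero] using hsub
    have hb : ¬Even b := fun hb ↦
      Int.prime_two.not_isUnit (hab.isUnit_of_dvd' (hparity.2 hb).two_dvd hb.two_dvd)
    exact sq_eq_sq_of_odd_of_quartic (Int.not_even_iff_odd.1 (hparity.not.2 hb))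
      (Int.not_even_iff_odd.1 hb) h
  · exact Or.inl (eq_zero_of_quartic hc h)

end Quartic

theorem eq_of_mul_quadratic_eq_sq {p q n : ℤ} (hp : 0 < p) (hq : 0 < q) (hpq : IsCoprime p q)
    (hp5 : ¬5 ∣ p) (h : p * q * (p ^ 2 - 2 * p * q + 5 * q ^ 2) = n ^ 2) : p = q := by
  have hquad : 0 ≤ p ^ 2 - 2 * p * q + 5 * q ^ 2 := by linarith [sq_nonneg (p - q), sq_nonneg q]
  have hp5q : IsCoprime p (5 * q ^ 2) :=
    (((by norm_num : Prime (5 : ℤ)).coprime_iff_not_dvd.2 hp5).symm).mul_right hpq.pow_right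
  have hcop : IsCoprime (p * q) (p ^ 2 - 2 * p * q + 5 * q ^ 2) := by
    refine .mul_left ?_ ?_
    · rw [show p ^ 2 - 2 * p * q + 5 * q ^ 2 = 5 * q ^ 2 + p * (p - 2 * q) by ring]
      exact hp5q.add_mul_left_right (p - 2 * q)
    · rw [show p ^ 2 - 2 * p * q + 5 * q ^ 2 = p ^ 2 + q * (5 * q - 2 * p) by ring]
      exact hpq.symm.pow_right.add_mul_left_right (5 * q - 2 * p)
  obtain ⟨m, c, -, -, hm, hc⟩ :=
    exists_isCoprime_eq_pow_of_mul_eq_pow two_ne_zero (by positivity) hquad hcop h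
  obtain ⟨a, b, hab, -, rfl, rfl⟩ :=
    exists_isCoprime_eq_pow_of_mul_eq_pow two_ne_zero hp.le hq.le hpq hm
  refine (eq_zero_or_sq_eq_sq_of_quartic hab (c := c) ?_).resolve_left ?_
  · linear_combination hc
  · rintro rfl
    simp at hq

theorem eq_or_eq_five_mul_of_mul_quadratic_eq_sq {p q n : ℤ} (hp : 0 < p) (hq : 0 < q)
    (hpq : IsCoprime p q) (h : p * q * (p ^ 2 - 2 * p * q + 5 * q ^ 2) = n ^ 2) :
    p = q ∨ p = 5 * q := by
  by_cases hp5 : 5 ∣ p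
  · right
    obtain ⟨k, rfl⟩ := hp5
    have hq5 : ¬5 ∣ q := fun hq5 ↦
      (by norm_num : Prime (5 : ℤ)).not_isUnit (hpq.isUnit_of_dvd' (dvd_mul_right 5 k) hq5)
    have hn : (5 : ℤ) ^ 2 * (q * k * (q ^ 2 - 2 * q * k + 5 * k ^ 2)) = n ^ 2 := by
      linear_combination h
    obtain ⟨l, rfl⟩ : 5 ∣ n := (Int.pow_dvd_pow_iff two_ne_zero).1 ⟨_, hn.symm⟩
    rw [mul_pow] at hn
    rw [eq_of_mul_quadratic_eq_sq hq (by linarith) hpq.of_mul_left_right.symm hq5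
      (mul_left_cancel₀ (by norm_num) hn)]
  · exact Or.inl (eq_of_mul_quadratic_eq_sq hp hq hpq hp5 h)

theorem eq_zero_or_eq_one_or_eq_five_of_sq_eq {z w : ℚ} (h : w ^ 2 = z * (z ^ 2 - 2 * z + 5)) :
    z = 0 ∨ z = 1 ∨ z = 5 := by
  have hz : 0 ≤ z :=
    nonneg_of_mul_nonneg_left (h ▸ sq_nonneg w) (by linarith [sq_nonneg (z - 1)])
  refine hz.eq_or_lt'.imp_right fun hz0 ↦ ?_
  have hden : (0 : ℤ) < z.den := mod_cast z.pos
  have hcop : IsCoprime z.num z.den := Int.isCoprime_iff_gcd_eq_one.2 z.reduced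
  have hsq : IsSquare (z.num * z.den * (z.num ^ 2 - 2 * z.num * z.den + 5 * z.den ^ 2)) := by
    refine Rat.isSquare_intCast_iff.1 ⟨w * z.den ^ 2, ?_⟩
    push_cast
    rw [← Rat.mul_den_eq_num z]
    linear_combination -(z.den : ℚ) ^ 4 * h
  obtain ⟨n, hn⟩ := hsq
  have hden0 : (z.den : ℚ) ≠ 0 := mod_cast hden.ne'
  rw [← Rat.num_div_den z, div_eq_iff hden0, div_eq_iff hden0, one_mul]
  exact_mod_cast eq_or_eq_five_mul_of_mul_quadratic_eq_sq (Rat.num_pos.2 hz0) hden hcop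
    (hn.trans (sq n).symm)

theorem sq_eq_mul_quadratic_iff {z w : ℚ} :
    w ^ 2 = z * (z ^ 2 - 2 * z + 5) ↔
      (z = 0 ∧ w = 0) ∨ (z = 1 ∧ (w = 2 ∨ w = -2)) ∨ (z = 5 ∧ (w = 10 ∨ w = -10)) := by
  constructor
  · intro h
    rcases eq_zero_or_eq_one_or_eq_five_of_sq_eq h with rfl | rfl | rfl
    · simpa using h
    · have hw : w ^ 2 = 2 ^ 2 := by linear_combination h
      exact Or.inr (Or.inl ⟨rfl, sq_eq_sq_iff_eq_or_eq_neg.1 hw⟩)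
    · have hw : w ^ 2 = 10 ^ 2 := by linear_combination h
      exact Or.inr (Or.inr ⟨rfl, sq_eq_sq_iff_eq_or_eq_neg.1 hw⟩)
  · rintro (⟨rfl, rfl⟩ | ⟨rfl, rfl | rfl⟩ | ⟨rfl, rfl | rfl⟩) <;> norm_num

/-- The rational points of the curve
`x⁴ + (12 − 16t)x³ + (64t² − 64t + 36)x² + (256t² − 64t + 160)x + 256t² = 0`
are exactly `(0, 0)`, `(0, −10)` and `(−5/2, −10)`. -/
theorem curve_C3_points (t x : ℚ) :
    x ^ 4 + (12 - 16 * t) * x ^ 3 + (64 * t ^ 2 - 64 * t + 36) * x ^ 2 +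
      (256 * t ^ 2 - 64 * t + 160) * x + 256 * t ^ 2 = 0 ↔
    (t = 0 ∧ x = 0) ∨ (t = 0 ∧ x = -10) ∨ (t = -5/2 ∧ x = -10) := by
  constructor
  · intro h
    have hcurve : ((x + 2) * (8 * t - x) / 8) ^ 2 =
        -x / 2 * ((-x / 2) ^ 2 - 2 * (-x / 2) + 5) := by
      linear_combination h / 64
    rcases sq_eq_mul_quadratic_iff.1 hcurve with ⟨hz, hw⟩ | ⟨hz, hw⟩ | ⟨hz, hw⟩
    · obtain rfl : x = 0 := by linarith
      exact Or.inl ⟨by linarith, rfl⟩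
    · obtain rfl : x = -2 := by linarith
      norm_num at hw
    · obtain rfl : x = -10 := by linarith
      rcases hw with hw | hw
      · exact Or.inr (Or.inr ⟨by linarith, rfl⟩)
      · exact Or.inr (Or.inl ⟨by linarith, rfl⟩)
  · rintro (⟨rfl, rfl⟩ | ⟨rfl, rfl⟩ | ⟨rfl, rfl⟩) <;> norm_num
end
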